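/- arXiv:1203.6504 — 3 statements merged into one kernel-verified Lean document; each statement's English description precedes it below -/
import Mathlib

section
/- Let n be a positive integer. There exist positive real constants c₁ and c₂ such that for all sufficiently large n, the number of isomorphism classes of kei of order n is at least 2^(c₁ n²), the number of isomorphism classes of kei of order n is at most the number of isomorphism classes of quandles of order n, which is at most the number of isomorphism classes of racks of order n, which is at most 2^(c₂ n²). -/
/-- A rack: right multiplications are bijections, and self-distributivity holds. -/
def IsRack {X : Type*} (op : X → X → X) : Prop :=
  (∀ y : X, Function.Bijective fun x => op x y) ∧
  ∀ x y z : X, op (op x y) z = op (op x z) (op y z)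

/-- A quandle is an idempotent rack. -/
def IsQuandle {X : Type*} (op : X → X → X) : Prop :=
  IsRack op ∧ ∀ x : X, op x x = x

/-- A kei is a quandle whose right multiplications are involutions. -/
def IsKei {X : Type*} (op : X → X → X) : Prop :=
  IsQuandle op ∧ ∀ x y : X, op (op x y) y = x

/-- Two binary operations on `X` are isomorphic as racks iff there is a bijection
intertwining them. -/
def RackIso {X : Type*} (op op' : X → X → X) : Prop :=
  ∃ θ : Equiv.Perm X, ∀ x y : X, θ (op x y) = op' (θ x) (θ y)

/-- The number of isomorphism classes of racks of order `n`. -/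
noncomputable def numRack (n : ℕ) : ℕ :=
  Nat.card (Quot fun op op' : {op : Fin n → Fin n → Fin n // IsRack op} =>
    RackIso op.1 op'.1)

/-- The number of isomorphism classes of quandles of order `n`. -/
noncomputable def numQuandle (n : ℕ) : ℕ :=
  Nat.card (Quot fun op op' : {op : Fin n → Fin n → Fin n // IsQuandle op} =>
    RackIso op.1 op'.1)

/-- The number of isomorphism classes of kei of order `n`. -/
noncomputable def numKei (n : ℕ) : ℕ :=
  Nat.card (Quot fun op op' : {op : Fin n → Fin n → Fin n // IsKei op} =>
    RackIso op.1 op'.1)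

/-! ### Isomorphism classes -/

theorem RackIso.refl' {X : Type*} (op : X → X → X) : RackIso op op :=
  ⟨1, fun _ _ => rfl⟩

theorem RackIso.symm' {X : Type*} {op op' : X → X → X} (h : RackIso op op') :
    RackIso op' op := by
  obtain ⟨θ, h⟩ := h
  refine ⟨θ.symm, fun x y => ?_⟩
  rw [Equiv.symm_apply_eq, h]
  simp

theorem RackIso.trans' {X : Type*} {op op' op'' : X → X → X} (h : RackIso op op')
    (h' : RackIso op' op'') : RackIso op op'' := by
  obtain ⟨θ, h⟩ := h
  obtain ⟨φ, h'⟩ := h'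
  refine ⟨θ.trans φ, fun x y => ?_⟩
  simp [h, h']

theorem quot_eq_iff {X : Type*} {p : (X → X → X) → Prop} (a b : {op : X → X → X // p op}) :
    (Quot.mk (fun op op' : {op : X → X → X // p op} => RackIso op.1 op'.1) a =
      Quot.mk _ b) ↔ RackIso a.1 b.1 := by
  have he : Equivalence (fun op op' : {op : X → X → X // p op} => RackIso op.1 op'.1) :=
    ⟨fun _ => RackIso.refl' _, fun h => RackIso.symm' h, fun h h' => RackIso.trans' h h'⟩
  exact ⟨fun h => (Equivalence.eqvGen_iff he).1 (Quot.eqvGen_exact h), fun h => Quot.sound h⟩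

theorem card_quot_mono {n : ℕ} {p q : (Fin n → Fin n → Fin n) → Prop} (hpq : ∀ op, p op → q op) :
    Nat.card (Quot fun op op' : {op : Fin n → Fin n → Fin n // p op} => RackIso op.1 op'.1) ≤
    Nat.card (Quot fun op op' : {op : Fin n → Fin n → Fin n // q op} => RackIso op.1 op'.1) := by
  refine Nat.card_le_card_of_injective
    (Quot.map (fun a => ⟨a.1, hpq _ a.2⟩) (fun a b h => h)) ?_
  rintro ⟨a⟩ ⟨b⟩ h
  exact (quot_eq_iff a b).2 ((quot_eq_iff (p := q) ⟨a.1, hpq _ a.2⟩ ⟨b.1, hpq _ b.2⟩).1 h)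

/-- Each isomorphism class has at most `n!` members. -/
theorem card_le_quot_mul {n : ℕ} (p : (Fin n → Fin n → Fin n) → Prop) :
    Nat.card {op : Fin n → Fin n → Fin n // p op} ≤
    Nat.card (Quot fun op op' : {op : Fin n → Fin n → Fin n // p op} => RackIso op.1 op'.1)
      * n.factorial := by
  classical
  have : n.factorial = Nat.card (Equiv.Perm (Fin n)) := by
    simp [Nat.card_eq_fintype_card, Fintype.card_perm]
  rw [this, ← Nat.card_prod]
  have hex : ∀ a : {op : Fin n → Fin n → Fin n // p op}, RackIso a.1 (Quot.out (Quot.mk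
      (fun op op' : {op : Fin n → Fin n → Fin n // p op} => RackIso op.1 op'.1) a)).1 := by
    intro a
    exact (quot_eq_iff _ _).1 (Quot.out_eq _).symm
  choose θ hθ using hex
  refine Nat.card_le_card_of_injective (fun a => (Quot.mk _ a, θ a)) ?_
  intro a b hab
  simp only [Prod.mk.injEq] at hab
  obtain ⟨h1, h2⟩ := hab
  ext x y : 3
  apply (θ a).injective
  rw [hθ a, h1, h2, ← hθ b]

/-! ### Lower bound -/

/-- The operation flipping `x` by `σ` when `T x y`. -/
def flipOp {X : Type*} (σ : X → X) (T : X → X → Bool) (x y : X) : X :=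
  if T x y then σ x else x

theorem flipOp_isKei {X : Type*} (σ : X → X) (T : X → X → Bool) (hσ : ∀ x, σ (σ x) = x)
    (h1 : ∀ x y, T (σ x) y = T x y) (h2 : ∀ x y, T x (σ y) = T x y)
    (h3 : ∀ x, T x x = false) : IsKei (flipOp σ T) := by
  have inv : ∀ x y, flipOp σ T (flipOp σ T x y) y = x := by
    intro x y
    unfold flipOp
    cases h : T x y <;> simp [h, h1, hσ]
  refine ⟨⟨⟨fun y => Function.Involutive.bijective (fun x => inv x y), ?_⟩, ?_⟩, inv⟩
  · intro x y z
    unfold flipOp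
    cases h : T x y <;> cases h' : T x z <;> cases h'' : T y z <;> simp [h, h', h1, h2]
  · intro x
    simp [flipOp, h3]

/-- The involution on `Fin n` exchanging `i` and `i + m` for `i < m`. -/
def sig (n m : ℕ) (h : 3 * m ≤ n) (x : Fin n) : Fin n :=
  if h1 : x.1 < m then ⟨x.1 + m, by omega⟩
  else if h2 : x.1 < 2 * m then ⟨x.1 - m, by omega⟩ else x

/-- The table of flips given by a Boolean matrix. -/
def tab (n m : ℕ) (U : Fin m → Fin m → Bool) (x y : Fin n) : Bool :=
  if h : 2 * m ≤ y.1 ∧ y.1 < 3 * m then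
    (if h1 : x.1 < m then U ⟨x.1, h1⟩ ⟨y.1 - 2 * m, by omega⟩
     else if h2 : x.1 < 2 * m then U ⟨x.1 - m, by omega⟩ ⟨y.1 - 2 * m, by omega⟩ else false)
  else false

theorem sig_val (n m : ℕ) (h : 3 * m ≤ n) (x : Fin n) : (sig n m h x).1 =
    if x.1 < m then x.1 + m else if x.1 < 2 * m then x.1 - m else x.1 := by
  unfold sig
  split_ifs <;> rfl

theorem sig_sig (n m : ℕ) (h : 3 * m ≤ n) (x : Fin n) : sig n m h (sig n m h x) = x := by
  apply Fin.ext
  rw [sig_val, sig_val]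
  split_ifs <;> omega

theorem tab_sig_left (n m : ℕ) (h : 3 * m ≤ n) (U) (x y : Fin n) :
    tab n m U (sig n m h x) y = tab n m U x y := by
  have hx := sig_val n m h x
  unfold tab
  split_ifs at hx with a b <;> simp only [hx] <;> split_ifs <;> first | rfl | omega | skip
  all_goals (congr 2; omega)

theorem tab_sig_right (n m : ℕ) (h : 3 * m ≤ n) (U) (x y : Fin n) :
    tab n m U x (sig n m h y) = tab n m U x y := by
  by_cases hy : y.1 < 2 * m
  · have hx := sig_val n m h y
    have : (sig n m h y).1 < 2 * m := by split_ifs at hx <;> omega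
    unfold tab
    rw [dif_neg (by omega), dif_neg (by omega)]
  · have : sig n m h y = y := by
      apply Fin.ext
      rw [sig_val]
      split_ifs <;> omega
    rw [this]

theorem tab_self (n m : ℕ) (U) (x : Fin n) : tab n m U x x = false := by
  unfold tab
  split_ifs <;> first | rfl | omega

theorem lower_count (n m : ℕ) (h : 3 * m ≤ n) :
    2 ^ (m ^ 2) ≤ Nat.card {op : Fin n → Fin n → Fin n // IsKei op} := by
  have : 2 ^ (m ^ 2) = Nat.card (Fin m → Fin m → Bool) := by
    simp [Nat.card_eq_fintype_card, ← pow_mul, sq]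
  rw [this]
  refine Nat.card_le_card_of_injective (fun U => ⟨flipOp (sig n m h) (tab n m U),
    flipOp_isKei _ _ (sig_sig n m h) (tab_sig_left n m h U) (tab_sig_right n m h U)
      (tab_self n m U)⟩) ?_
  intro U V hUV
  simp only [Subtype.mk.injEq] at hUV
  funext i j
  have hi := i.2
  have hj := j.2
  have e := congrFun (congrFun hUV ⟨i.1, by omega⟩) ⟨j.1 + 2 * m, by omega⟩
  have key : ∀ W : Fin m → Fin m → Bool,
      tab n m W ⟨i.1, by omega⟩ ⟨j.1 + 2 * m, by omega⟩ = W i j := by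
    intro W
    unfold tab
    rw [dif_pos (by simp only; omega), dif_pos (by simp only; omega)]
    simp
  have hne : sig n m h ⟨i.1, by omega⟩ ≠ ⟨i.1, by omega⟩ := by
    intro hc
    have := congrArg Fin.val hc
    rw [sig_val] at this
    simp only at this
    split_ifs at this
    omega
  unfold flipOp at e
  rw [key, key] at e
  cases hU : U i j <;> cases hV : V i j <;> simp [hU, hV] at e ⊢
  · exact hne e.symm
  · exact hne e

/-! ### Upper bound -/

/-- A surjection whose target is at most `L` smaller than its source is
injective up to at most `2 L` points. -/
theorem bad_card {α β : Type*} [Fintype α] [Fintype β] [DecidableEq β] (q : α → β)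
    (hq : Function.Surjective q) (L : ℕ) (hL : Fintype.card α ≤ Fintype.card β + L)
    (B : Finset α) (hB : ∀ a ∈ B, ∃ a', a' ≠ a ∧ q a' = q a) : B.card ≤ 2 * L := by
  classical
  have h1 : B.card = ∑ c : β, (B.filter (fun a => q a = c)).card :=
    Finset.card_eq_sum_card_fiberwise (fun _ _ => Finset.mem_coe.2 (Finset.mem_univ _))
  have h2 : Fintype.card α = ∑ c : β, (Finset.univ.filter (fun a => q a = c)).card :=
    Finset.card_eq_sum_card_fiberwise (fun _ _ => Finset.mem_coe.2 (Finset.mem_univ _))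
  have h3 : ∀ c : β, (B.filter (fun a => q a = c)).card + 2 ≤
      2 * (Finset.univ.filter (fun a => q a = c)).card := by
    intro c
    have hsub : (B.filter (fun a => q a = c)).card ≤
        (Finset.univ.filter (fun a => q a = c)).card :=
      Finset.card_le_card (Finset.filter_subset_filter _ (Finset.subset_univ _))
    rcases (B.filter (fun a => q a = c)).eq_empty_or_nonempty with h0 | ⟨a, ha⟩
    · rw [h0]
      obtain ⟨a, ha⟩ := hq c
      have : 0 < (Finset.univ.filter (fun a => q a = c)).card :=
        Finset.card_pos.2 ⟨a, by simp [ha]⟩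
      rw [Finset.card_empty]
      omega
    · simp only [Finset.mem_filter] at ha
      obtain ⟨a', hne, hqa⟩ := hB a ha.1
      have : 1 < (Finset.univ.filter (fun a => q a = c)).card :=
        Finset.one_lt_card.2 ⟨a', by simp [hqa, ha.2], a, by simp [ha.2], hne⟩
      omega
  have h4 := Finset.sum_le_sum (fun c (_ : c ∈ (Finset.univ : Finset β)) => h3 c)
  rw [Finset.sum_add_distrib, ← h1, ← Finset.mul_sum, ← h2] at h4
  simp at h4
  omega

/-- Count of functions from the classes of a partition choosing an element of the class, up to
at most `m` exceptions. -/
theorem choice_count {n m : ℕ} {O : Type*} [Fintype O] [DecidableEq O] (hn : 1 ≤ n)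
    (π : Fin n → O) (hπ : Function.Surjective π) :
    (Finset.univ.filter (fun d : O → Fin n =>
      (Finset.univ.filter (fun o => π (d o) ≠ o)).card ≤ m)).card ≤ 2 ^ n * (2 ^ n * n ^ m) := by
  classical
  have hO : Fintype.card O ≤ n := by simpa using Fintype.card_le_of_surjective π hπ
  have hsub : (Finset.univ.filter (fun d : O → Fin n =>
      (Finset.univ.filter (fun o => π (d o) ≠ o)).card ≤ m)) ⊆
      ((Finset.univ : Finset (Finset O)).filter (fun B => B.card ≤ m)).biUnion
        (fun B => Fintype.piFinset (fun o => if o ∈ B then Finset.univ else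
          Finset.univ.filter (fun x => π x = o))) := by
    intro d hd
    simp only [Finset.mem_filter, Finset.mem_univ, true_and] at hd
    simp only [Finset.mem_biUnion, Finset.mem_filter, Finset.mem_univ, true_and,
      Fintype.mem_piFinset]
    refine ⟨_, hd, fun o => ?_⟩
    split_ifs with h
    · simp
    · simpa using h
  refine (Finset.card_le_card hsub).trans ((Finset.card_biUnion_le_card_mul _ _ (2 ^ n * n ^ m)
    ?_).trans ?_)
  · intro B hB
    simp only [Finset.mem_filter, Finset.mem_univ, true_and] at hB
    rw [Fintype.card_piFinset]
    calc ∏ o, (if o ∈ B then Finset.univ else Finset.univ.filter (fun x => π x = o)).card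
        ≤ ∏ o, (2 ^ (Finset.univ.filter (fun x => π x = o)).card * (if o ∈ B then n else 1)) := by
          apply Finset.prod_le_prod'
          intro o _
          split_ifs
          · simpa using Nat.le_mul_of_pos_left n (by positivity)
          · simpa using Nat.lt_two_pow_self.le
      _ = 2 ^ n * n ^ B.card := by
          rw [Finset.prod_mul_distrib, Finset.prod_pow_eq_pow_sum, Finset.prod_ite_mem]
          congr 1
          · congr 1
            have := Finset.card_eq_sum_card_fiberwise (f := π)
              (s := (Finset.univ : Finset (Fin n))) (t := Finset.univ)
              (fun _ _ => Finset.mem_coe.2 (Finset.mem_univ _))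
            simpa using this.symm
          · simp
      _ ≤ 2 ^ n * n ^ m := Nat.mul_le_mul_left _ (Nat.pow_le_pow_right hn hB)
  · apply Nat.mul_le_mul_right
    refine (Finset.card_filter_le _ _).trans ?_
    simpa using Nat.pow_le_pow_right (by norm_num) hO

/-- The group generated by a family of permutations. -/
def genGroup {n : ℕ} (F : Fin n → Equiv.Perm (Fin n)) : Subgroup (Equiv.Perm (Fin n)) :=
  Subgroup.closure (Set.range F)

/-- Its set of orbits. -/
abbrev Orb {n : ℕ} (F : Fin n → Equiv.Perm (Fin n)) : Type :=
  MulAction.orbitRel.Quotient (genGroup F) (Fin n)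

noncomputable instance {n : ℕ} (F : Fin n → Equiv.Perm (Fin n)) : Fintype (Orb F) :=
  Fintype.ofFinite _

/-- The projection to the orbits. -/
def toOrb {n : ℕ} (F : Fin n → Equiv.Perm (Fin n)) (x : Fin n) : Orb F := Quotient.mk _ x

theorem toOrb_surj {n : ℕ} (F : Fin n → Equiv.Perm (Fin n)) : Function.Surjective (toOrb F) :=
  fun o => ⟨Quotient.out o, Quotient.out_eq o⟩

theorem toOrb_eq {n : ℕ} (F : Fin n → Equiv.Perm (Fin n)) (x y : Fin n) :
    toOrb F x = toOrb F y ↔ ∃ g ∈ genGroup F, g y = x := by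
  unfold toOrb
  rw [Quotient.eq, MulAction.orbitRel_apply, MulAction.mem_orbit_iff]
  constructor
  · rintro ⟨g, hg⟩
    exact ⟨g.1, g.2, hg⟩
  · rintro ⟨g, hg, h⟩
    exact ⟨⟨g, hg⟩, h⟩

/-- Right translations of a rack as permutations. -/
noncomputable def rt {n : ℕ} (op : Fin n → Fin n → Fin n) (h : IsRack op) (y : Fin n) :
    Equiv.Perm (Fin n) := Equiv.ofBijective _ (h.1 y)

theorem rt_apply {n : ℕ} (op : Fin n → Fin n → Fin n) (h : IsRack op) (x y : Fin n) :
    rt op h y x = op x y := rfl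

/-- Keep the right translations of elements of `S` only. -/
noncomputable def cut {n : ℕ} (op : Fin n → Fin n → Fin n) (h : IsRack op) (S : Finset (Fin n))
    (y : Fin n) : Equiv.Perm (Fin n) := if y ∈ S then rt op h y else 1

theorem cut_aut {n : ℕ} (op : Fin n → Fin n → Fin n) (h : IsRack op) (S : Finset (Fin n))
    (g : Equiv.Perm (Fin n)) (hg : g ∈ genGroup (cut op h S)) (x y : Fin n) :
    g (op x y) = op (g x) (g y) := by
  unfold genGroup at hg
  induction hg using Subgroup.closure_induction generalizing x y with
  | mem g hg =>
    obtain ⟨z, rfl⟩ := hg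
    unfold cut
    split_ifs
    · simp only [rt_apply]
      exact h.2 x y z
    · rfl
  | one => rfl
  | mul a b _ _ ha hb => simp only [Equiv.Perm.mul_apply, ha, hb]
  | inv a _ ha =>
    rw [Equiv.Perm.inv_eq_iff_eq, ha]
    simp

/-- The good generating set. -/
theorem exists_good {n : ℕ} (L : ℕ) (op : Fin n → Fin n → Fin n) (h : IsRack op) :
    ∃ S : Finset (Fin n), S.card * L ≤ n ∧ ∀ y, Fintype.card (Orb (cut op h S)) ≤
      Fintype.card (Orb (cut op h (insert y S))) + L := by
  obtain ⟨S, -, hS⟩ := Finset.exists_min_image (Finset.univ : Finset (Finset (Fin n)))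
    (fun S => Fintype.card (Orb (cut op h S)) + S.card * L) ⟨∅, Finset.mem_univ _⟩
  refine ⟨S, ?_, fun y => ?_⟩
  · have h0 := hS ∅ (Finset.mem_univ _)
    have h1 : Fintype.card (Orb (cut op h ∅)) ≤ n := by
      simpa using Fintype.card_le_of_surjective _ (toOrb_surj (cut op h ∅))
    simp only [Finset.card_empty, zero_mul, add_zero] at h0
    omega
  · have h0 := hS (insert y S) (Finset.mem_univ _)
    have h1 : (insert y S).card * L ≤ (S.card + 1) * L :=
      Nat.mul_le_mul_right _ (Finset.card_insert_le _ _)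
    rw [add_mul, one_mul] at h1
    omega

theorem good_bad {n : ℕ} [∀ F : Fin n → Equiv.Perm (Fin n), DecidableEq (Orb F)]
    (L : ℕ) (op : Fin n → Fin n → Fin n) (h : IsRack op)
    (S : Finset (Fin n)) (y : Fin n) (hS : Fintype.card (Orb (cut op h S)) ≤
      Fintype.card (Orb (cut op h (insert y S))) + L) :
    (Finset.univ.filter (fun o : Orb (cut op h S) =>
      toOrb (cut op h S) (op (Quotient.out o) y) ≠ o)).card ≤ 2 * L := by
  have hle : genGroup (cut op h S) ≤ genGroup (cut op h (insert y S)) := by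
    refine (Subgroup.closure_le _).2 ?_
    rintro _ ⟨z, rfl⟩
    unfold cut
    split_ifs with hz
    · refine Subgroup.subset_closure ⟨z, ?_⟩
      simp [cut, hz]
    · exact one_mem _
  have hy : rt op h y ∈ genGroup (cut op h (insert y S)) :=
    Subgroup.subset_closure ⟨y, by simp [cut]⟩
  have hmap : ∀ x x', toOrb (cut op h S) x = toOrb (cut op h S) x' →
      toOrb (cut op h (insert y S)) x = toOrb (cut op h (insert y S)) x' := by
    intro x x' hx
    obtain ⟨g, hg, hgx⟩ := (toOrb_eq _ _ _).1 hx
    exact (toOrb_eq _ _ _).2 ⟨g, hle hg, hgx⟩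
  let q : Orb (cut op h S) → Orb (cut op h (insert y S)) :=
    fun o => toOrb _ (Quotient.out o)
  have hq : ∀ x, q (toOrb _ x) = toOrb _ x := fun x => hmap _ _ (Quotient.out_eq _)
  refine bad_card q ?_ L hS _ ?_
  · intro o
    obtain ⟨x, rfl⟩ := toOrb_surj _ o
    exact ⟨_, hq x⟩
  · intro o ho
    simp only [Finset.mem_filter, Finset.mem_univ, true_and] at ho
    refine ⟨_, ho, ?_⟩
    rw [hq]
    exact (toOrb_eq _ _ _).2 ⟨_, hy, rfl⟩

/-- A rack is determined by part of its right translations, and by its values at representatives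
of the orbits of the group which these generate. -/
theorem rack_determined {n : ℕ} (F : Fin n → Equiv.Perm (Fin n))
    (op op' : Fin n → Fin n → Fin n) (h : IsRack op) (h' : IsRack op') (S S' : Finset (Fin n))
    (hF : cut op h S = F) (hF' : cut op' h' S' = F)
    (hD : ∀ (y : Fin n) (o : Orb F), op (Quotient.out o) y = op' (Quotient.out o) y) :
    op = op' := by
  funext x y
  obtain ⟨g, hg, hgx⟩ := (toOrb_eq F x (Quotient.out (toOrb F x))).1 (Quotient.out_eq _).symm
  have e1 := cut_aut op h S g (by rw [hF]; exact hg) (Quotient.out (toOrb F x)) (g⁻¹ y)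
  have e2 := cut_aut op' h' S' g (by rw [hF']; exact hg) (Quotient.out (toOrb F x)) (g⁻¹ y)
  have e3 : g (g⁻¹ y) = y := by simp
  rw [hgx, e3] at e1 e2
  rw [← e1, ← e2, hD]

theorem family_count {n k : ℕ} (hn : 1 ≤ n) :
    (Finset.univ.filter (fun F : Fin n → Equiv.Perm (Fin n) =>
      (Finset.univ.filter (fun y => F y ≠ 1)).card ≤ k)).card ≤ 2 ^ n * (n ^ n) ^ k := by
  classical
  have hsub : (Finset.univ.filter (fun F : Fin n → Equiv.Perm (Fin n) =>
      (Finset.univ.filter (fun y => F y ≠ 1)).card ≤ k)) ⊆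
      ((Finset.univ : Finset (Finset (Fin n))).filter (fun B => B.card ≤ k)).biUnion
        (fun B => Fintype.piFinset (fun y => if y ∈ B then Finset.univ else {1})) := by
    intro d hd
    simp only [Finset.mem_filter, Finset.mem_univ, true_and] at hd
    simp only [Finset.mem_biUnion, Finset.mem_filter, Finset.mem_univ, true_and,
      Fintype.mem_piFinset]
    refine ⟨_, hd, fun o => ?_⟩
    split_ifs with h
    · simp
    · simpa using h
  refine (Finset.card_le_card hsub).trans ((Finset.card_biUnion_le_card_mul _ _ ((n ^ n) ^ k)
    ?_).trans ?_)
  · intro B hB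
    simp only [Finset.mem_filter, Finset.mem_univ, true_and] at hB
    rw [Fintype.card_piFinset]
    calc ∏ y, (if y ∈ B then (Finset.univ : Finset (Equiv.Perm (Fin n))) else {1}).card
        = ∏ y, (if y ∈ B then n.factorial else 1) := by
          apply Finset.prod_congr rfl
          intro y _
          split_ifs <;> simp [Fintype.card_perm]
      _ = n.factorial ^ B.card := by
          rw [Finset.prod_ite_mem]
          simp
      _ ≤ (n ^ n) ^ B.card := Nat.pow_le_pow_left (Nat.factorial_le_pow n) _
      _ ≤ (n ^ n) ^ k := Nat.pow_le_pow_right (by positivity) hB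
  · apply Nat.mul_le_mul_right
    refine (Finset.card_filter_le _ _).trans ?_
    simp

theorem rack_count (n L : ℕ) (hn : 1 ≤ n) (hL : 1 ≤ L) :
    Nat.card {op : Fin n → Fin n → Fin n // IsRack op} ≤
      (2 ^ n * (2 ^ n * n ^ (2 * L))) ^ n * (2 ^ n * (n ^ n) ^ (n / L)) := by
  classical
  have hex := fun a : {op : Fin n → Fin n → Fin n // IsRack op} => exists_good L a.1 a.2
  choose S hS1 hS2 using hex
  rw [Nat.card_eq_fintype_card, ← Finset.card_univ]
  let Φ : {op : Fin n → Fin n → Fin n // IsRack op} → Fin n → Equiv.Perm (Fin n) :=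
    fun a => cut a.1 a.2 (S a)
  have step1 := Finset.card_le_mul_card_image (f := Φ)
    (Finset.univ : Finset {op : Fin n → Fin n → Fin n // IsRack op})
    ((2 ^ n * (2 ^ n * n ^ (2 * L))) ^ n) ?_
  · refine step1.trans (Nat.mul_le_mul_left _ (le_trans (Finset.card_le_card ?_)
      (family_count (k := n / L) hn)))
    intro F hF
    simp only [Finset.mem_image, Finset.mem_univ, true_and] at hF
    obtain ⟨a, rfl⟩ := hF
    simp only [Finset.mem_filter, Finset.mem_univ, true_and]
    rw [Nat.le_div_iff_mul_le hL]
    refine le_trans (Nat.mul_le_mul_right _ (Finset.card_le_card ?_)) (hS1 a)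
    intro y hy
    simp only [Finset.mem_filter, Finset.mem_univ, true_and] at hy
    by_contra hc
    exact hy (by simp [Φ, cut, hc])
  · intro F _
    have hc := choice_count (m := 2 * L) hn (toOrb F) (toOrb_surj F)
    set C := (Finset.univ.filter (fun d : Orb F → Fin n =>
      (Finset.univ.filter (fun o => toOrb F (d o) ≠ o)).card ≤ 2 * L)) with hC
    have : (Fintype.piFinset (fun _ : Fin n => C)).card ≤
        (2 ^ n * (2 ^ n * n ^ (2 * L))) ^ n := by
      rw [Fintype.card_piFinset]
      simpa using Nat.pow_le_pow_left hc n
    refine le_trans ?_ this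
    refine Finset.card_le_card_of_injOn
      (fun a => fun y o => a.1 (Quotient.out o) y) ?_ ?_
    · intro a ha
      simp only [Finset.coe_filter, Finset.mem_univ, true_and, Set.mem_ofPred_eq] at ha
      subst ha
      simp only [Finset.mem_coe, Fintype.mem_piFinset]
      intro y
      rw [hC]
      simp only [Finset.mem_filter, Finset.mem_univ, true_and]
      exact good_bad L a.1 a.2 (S a) y (hS2 a y)
    · intro a ha b hb hab
      simp only [Finset.coe_filter, Finset.mem_univ, true_and, Set.mem_ofPred_eq] at ha hb
      apply Subtype.ext
      exact rack_determined F a.1 b.1 a.2 b.2 (S a) (S b) ha hb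
        (fun y o => congrFun (congrFun hab y) o)

/-! ### Arithmetic -/

theorem exists_L (n : ℕ) (hn : 1 ≤ n) : ∃ L : ℕ, 1 ≤ L ∧ n ≤ 2 ^ L ∧ L ^ 2 ≤ 8 * n := by
  refine ⟨Nat.log 2 n + 1, by omega, (Nat.lt_pow_succ_log_self (by norm_num) n).le, ?_⟩
  have h1 : 2 ^ Nat.log 2 n ≤ n := Nat.pow_log_le_self 2 (by omega)
  have h2 : ∀ k : ℕ, (k + 1) ^ 2 ≤ 8 * 2 ^ k ∧ 2 * k + 3 ≤ 8 * 2 ^ k := by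
    intro k
    induction k with
    | zero => norm_num
    | succ k ih =>
      obtain ⟨a, b⟩ := ih
      rw [pow_succ 2 k]
      constructor
      · nlinarith
      · omega
  exact (h2 _).1.trans (by omega)

theorem numRack_le (n : ℕ) (hn : 1 ≤ n) : numRack n ≤ 2 ^ (20 * n ^ 2) := by
  obtain ⟨L, hL, h1, h2⟩ := exists_L n hn
  have h0 : numRack n ≤ Nat.card {op : Fin n → Fin n → Fin n // IsRack op} :=
    Nat.card_le_card_of_surjective _ Quot.mk_surjective
  refine (h0.trans (rack_count n L hn hL)).trans ?_
  have a1 : n ^ (2 * L) ≤ 2 ^ (16 * n) := by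
    calc n ^ (2 * L) ≤ (2 ^ L) ^ (2 * L) := Nat.pow_le_pow_left h1 _
      _ = 2 ^ (2 * L ^ 2) := by rw [← pow_mul]; ring_nf
      _ ≤ 2 ^ (16 * n) := Nat.pow_le_pow_right (by norm_num) (by omega)
  have a2 : (n ^ n) ^ (n / L) ≤ 2 ^ (n ^ 2) := by
    calc (n ^ n) ^ (n / L) ≤ ((2 ^ L) ^ n) ^ (n / L) :=
          Nat.pow_le_pow_left (Nat.pow_le_pow_left h1 _) _
      _ = 2 ^ (n * (n / L * L)) := by rw [← pow_mul, ← pow_mul]; ring_nf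
      _ ≤ 2 ^ (n ^ 2) := by
          apply Nat.pow_le_pow_right (by norm_num)
          rw [sq]
          exact Nat.mul_le_mul_left _ (Nat.div_mul_le_self n L)
  calc (2 ^ n * (2 ^ n * n ^ (2 * L))) ^ n * (2 ^ n * (n ^ n) ^ (n / L))
      ≤ (2 ^ n * (2 ^ n * 2 ^ (16 * n))) ^ n * (2 ^ n * 2 ^ (n ^ 2)) := by gcongr
    _ = 2 ^ (19 * n ^ 2 + n) := by
        rw [← pow_add, ← pow_add, ← pow_add, ← pow_mul, ← pow_add]
        ring_nf
    _ ≤ 2 ^ (20 * n ^ 2) := Nat.pow_le_pow_right (by norm_num) (by nlinarith)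

theorem le_numKei (n : ℕ) (hn : 10000 ≤ n) :
    ∃ e : ℕ, (n : ℝ) ^ 2 / 32 ≤ e ∧ 2 ^ e ≤ numKei n := by
  obtain ⟨L, hL, h1, h2⟩ := exists_L n (by omega)
  have hLn : 32 * L ≤ n := by
    by_contra hc
    push Not at hc
    nlinarith
  have h3 := (lower_count n (n / 3) (by omega)).trans (card_le_quot_mul IsKei)
  have h4 : n.factorial ≤ 2 ^ (L * n) := by
    calc n.factorial ≤ n ^ n := Nat.factorial_le_pow n
      _ ≤ (2 ^ L) ^ n := Nat.pow_le_pow_left h1 _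
      _ = 2 ^ (L * n) := by rw [← pow_mul]
  have h5 : 2 ^ ((n / 3) ^ 2) ≤ numKei n * 2 ^ (L * n) :=
    h3.trans (Nat.mul_le_mul_left _ h4)
  have h6 : n ≤ 4 * (n / 3) := by omega
  have h7 : n ^ 2 ≤ 16 * (n / 3) ^ 2 := by nlinarith
  have h8 : 32 * (L * n) ≤ n ^ 2 := by nlinarith
  refine ⟨(n / 3) ^ 2 - L * n, ?_, ?_⟩
  · have : n ^ 2 ≤ 32 * ((n / 3) ^ 2 - L * n) := by omega
    have h9 : ((n ^ 2 : ℕ) : ℝ) ≤ ((32 * ((n / 3) ^ 2 - L * n) : ℕ) : ℝ) := Nat.cast_le.2 this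
    rw [Nat.cast_mul, Nat.cast_pow n 2] at h9
    push_cast only [Nat.cast_ofNat] at h9
    linarith
  · have : (n / 3) ^ 2 = ((n / 3) ^ 2 - L * n) + L * n := by omega
    rw [this, pow_add] at h5
    exact Nat.le_of_mul_le_mul_right h5 (by positivity)

theorem main_enumeration :
    ∃ c₁ c₂ : ℝ, 0 < c₁ ∧ 0 < c₂ ∧ ∃ N : ℕ, ∀ n : ℕ, N ≤ n →
      (2 : ℝ) ^ (c₁ * (n : ℝ) ^ 2) ≤ (numKei n : ℝ) ∧
      (numKei n : ℝ) ≤ (numQuandle n : ℝ) ∧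
      (numQuandle n : ℝ) ≤ (numRack n : ℝ) ∧
      (numRack n : ℝ) ≤ (2 : ℝ) ^ (c₂ * (n : ℝ) ^ 2) := by
  refine ⟨1 / 32, 20, by norm_num, by norm_num, 10000, fun n hn => ⟨?_, ?_, ?_, ?_⟩⟩
  · obtain ⟨e, he, hk⟩ := le_numKei n hn
    calc (2 : ℝ) ^ (1 / 32 * (n : ℝ) ^ 2) ≤ (2 : ℝ) ^ (e : ℝ) :=
          Real.rpow_le_rpow_of_exponent_le (by norm_num) (by linarith)
      _ = ((2 ^ e : ℕ) : ℝ) := by rw [Real.rpow_natCast]; norm_cast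
      _ ≤ numKei n := Nat.cast_le.2 hk
  · exact Nat.cast_le.2 (card_quot_mono fun op h => h.1)
  · exact Nat.cast_le.2 (card_quot_mono fun op h => h.1)
  · calc (numRack n : ℝ) ≤ ((2 ^ (20 * n ^ 2) : ℕ) : ℝ) := Nat.cast_le.2 (numRack_le n (by omega))
      _ = (2 : ℝ) ^ ((20 * n ^ 2 : ℕ) : ℝ) := by rw [Real.rpow_natCast]; norm_cast
      _ = (2 : ℝ) ^ (20 * (n : ℝ) ^ 2) := by push_cast; rfl
end

section
/- For every ε > 0 there exists N such that for all integers n ≥ N, the number of isomorphism classes of racks of order n is at most 2^((c + ε) n²), where c = (1/6)·log₂ 24 + (1/2)·log₂ 3. -/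
section RackCount

set_option linter.unusedSectionVars false

open Classical in
theorem rk_fiber {A B : Type*} [Fintype A] [Fintype B] (p : A → B) (hp : Function.Surjective p)
    (S : Finset A) (hS : ∀ b ∈ S, ∃ a, a ≠ b ∧ p a = p b) :
    S.card + 2 * Fintype.card B ≤ 2 * Fintype.card A := by
  obtain ⟨σ, hσ⟩ := hp.hasRightInverse
  have hinj : Function.Injective σ := hσ.injective
  set I : Finset A := Finset.univ.image σ with hI
  have hIc : I.card = Fintype.card B := by
    rw [hI, Finset.card_image_of_injective _ hinj, Finset.card_univ]
  have hcompl : Iᶜ.card + Fintype.card B = Fintype.card A := by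
    rw [← hIc]; exact Finset.card_compl_add_card I
  have h1 : (S.filter (fun a => a ∈ I)).card ≤ Iᶜ.card := by
    choose! g hg using hS
    apply Finset.card_le_card_of_injOn g
    · intro b hb
      simp only [Finset.coe_filter, Set.mem_ofPred_eq] at hb
      simp only [Finset.coe_compl, Set.mem_compl_iff, Finset.mem_coe]
      intro hgI
      obtain ⟨h2, h3⟩ := hg b hb.1
      obtain ⟨c, -, hc⟩ := Finset.mem_image.1 hgI
      obtain ⟨d, -, hd⟩ := Finset.mem_image.1 hb.2
      apply h2
      rw [← hc, ← hd, hσ, hσ] at h3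
      rw [← hc, ← hd, h3]
    · intro b hb b' hb' hbb
      simp only [Finset.coe_filter, Set.mem_ofPred_eq] at hb hb'
      obtain ⟨d, -, hd⟩ := Finset.mem_image.1 hb.2
      obtain ⟨d', -, hd'⟩ := Finset.mem_image.1 hb'.2
      have e1 := (hg b hb.1).2
      have e2 := (hg b' hb'.1).2
      rw [hbb] at e1
      rw [e1] at e2
      rw [← hd, ← hd', hσ, hσ] at e2
      rw [← hd, ← hd', e2]
  have h2 : (S.filter (fun a => ¬ a ∈ I)).card ≤ Iᶜ.card := by
    apply Finset.card_le_card
    intro a ha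
    simpa using (Finset.mem_filter.1 ha).2
  have h3 := Finset.card_filter_add_card_filter_not (s := S) (fun a => a ∈ I)
  omega

variable {α : Type} [Fintype α]

/-- One step along an edge with colour in `W`. -/
def RkStep (op : α → α → α) (W : Finset α) (a b : α) : Prop := ∃ w ∈ W, b = op a w

/-- Components of the graph with colours in `W`. -/
def rkComp (op : α → α → α) (W : Finset α) : Setoid α := Relation.EqvGen.setoid (RkStep op W)

/-- number of components -/
noncomputable def rkNum (op : α → α → α) (W : Finset α) : ℕ := Nat.card (Quotient (rkComp op W))

open Classical in
theorem rk_greedy (op : α → α → α) (t : ℕ) (ht : 1 ≤ t) :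
    ∃ W : Finset α, W.card * t ≤ Fintype.card α ∧
      ∀ y, rkNum op W < rkNum op (insert y W) + t := by
  let F : Finset (Finset α) := Finset.univ.filter
    (fun W => W.card * t + rkNum op W ≤ Fintype.card α)
  have hF : F.Nonempty := by
    refine ⟨∅, ?_⟩
    have h0 : rkNum op (∅ : Finset α) ≤ Fintype.card α := by
      rw [← Nat.card_eq_fintype_card]
      exact Nat.card_le_card_of_surjective (fun x : α => Quotient.mk (rkComp op ∅) x)
        Quotient.mk_surjective
    exact Finset.mem_filter.2 ⟨Finset.mem_univ _, by simpa using h0⟩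
  obtain ⟨W, hW, hmax⟩ := F.exists_max_image Finset.card hF
  have hW' := (Finset.mem_filter.1 hW).2
  refine ⟨W, by omega, fun y => ?_⟩
  by_contra hcon
  push Not at hcon
  have hy : y ∉ W := by
    intro hy
    rw [Finset.insert_eq_of_mem hy] at hcon
    omega
  have hc := Finset.card_insert_of_notMem hy
  have : insert y W ∈ F := by
    simp only [F, Finset.mem_filter, Finset.mem_univ, true_and]
    rw [hc, add_mul]
    omega
  have := hmax _ this
  omega

open Classical in
theorem rk_moved (op : α → α → α) (W : Finset α) (t : ℕ) (y : α)
    (h : rkNum op W < rkNum op (insert y W) + t) :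
    ∃ B : Finset (Quotient (rkComp op W)), B.card ≤ 2 * t ∧
      ∀ x, ¬ rkComp op W (op x y) x → Quotient.mk _ x ∈ B := by
  have hle : ∀ a b, rkComp op W a b → rkComp op (insert y W) a b := by
    intro a b hab
    induction hab with
    | rel a b hab =>
      obtain ⟨w, hw, rfl⟩ := hab
      exact Relation.EqvGen.rel _ _ ⟨w, Finset.mem_insert_of_mem hw, rfl⟩
    | refl => exact Relation.EqvGen.refl _
    | symm _ _ _ ih => exact Relation.EqvGen.symm _ _ ih
    | trans _ _ _ _ _ ih1 ih2 => exact Relation.EqvGen.trans _ _ _ ih1 ih2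
  let p : Quotient (rkComp op W) → Quotient (rkComp op (insert y W)) :=
    Quotient.map' id hle
  have hp : Function.Surjective p := by
    intro q
    induction q using Quotient.inductionOn with
    | h a => exact ⟨Quotient.mk _ a, rfl⟩
  let B : Finset (Quotient (rkComp op W)) := Finset.univ.filter
    (fun q => ∃ x, Quotient.mk _ x = q ∧ ¬ rkComp op W (op x y) x)
  refine ⟨B, ?_, ?_⟩
  · have := rk_fiber p hp B ?_
    · simp only [rkNum, Nat.card_eq_fintype_card] at h
      omega
    · intro b hb
      obtain ⟨x, rfl, hx⟩ := (Finset.mem_filter.1 hb).2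
      refine ⟨Quotient.mk _ (op x y), ?_, ?_⟩
      · intro he
        exact hx (Quotient.exact he)
      · apply Quotient.sound
        apply Relation.EqvGen.symm
        exact Relation.EqvGen.rel _ _ ⟨y, Finset.mem_insert_self _ _, rfl⟩
  · intro x hx
    simp only [B, Finset.mem_filter, Finset.mem_univ, true_and]
    exact ⟨x, rfl, hx⟩

/-- Subrack generated by `T`. -/
inductive RkCl (op : α → α → α) (T : Set α) : α → Prop
  | base (t : α) (ht : t ∈ T) : RkCl op T t
  | fwd (x t : α) (hx : RkCl op T x) (ht : t ∈ T) : RkCl op T (op x t)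
  | bwd (x t : α) (hx : RkCl op T (op x t)) (ht : t ∈ T) : RkCl op T x

theorem RkCl.mono {op : α → α → α} {T T' : Set α} (h : T ⊆ T') {x : α} (hx : RkCl op T x) :
    RkCl op T' x := by
  induction hx with
  | base t ht => exact .base t (h ht)
  | fwd x t _ ht ih => exact .fwd x t ih (h ht)
  | bwd x t _ ht ih => exact .bwd x t ih (h ht)

theorem RkCl.agree {op op' : α → α → α} (h : IsRack op) (h' : IsRack op') {T : Set α}
    (hT : ∀ t ∈ T, ∀ x, op x t = op' x t) {x : α} (hx : RkCl op T x) :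
    ∀ z, op z x = op' z x := by
  induction hx with
  | base t ht => exact hT t ht
  | fwd x t _ ht ih =>
    intro z
    obtain ⟨z', rfl⟩ := (h.1 t).2 z
    simp only
    rw [← h.2, ih, hT t ht, h'.2, ← hT t ht x, ← hT t ht z']
  | bwd x t _ ht ih =>
    intro z
    apply (h.1 t).1
    simp only
    rw [h.2, ih, hT t ht x, hT t ht z, ← h'.2, hT t ht]

theorem RkCl.of_comp {op : α → α → α} {T : Set α} {W : Finset α} (hW : ∀ w ∈ W, w ∈ T) {a b : α}
    (hab : rkComp op W a b) : RkCl op T a ↔ RkCl op T b := by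
  induction hab with
  | rel a b h =>
    obtain ⟨w, hw, rfl⟩ := h
    exact ⟨fun h => .fwd _ _ h (hW w hw), fun h => .bwd _ _ h (hW w hw)⟩
  | refl => exact Iff.rfl
  | symm _ _ _ ih => exact ih.symm
  | trans _ _ _ _ _ ih1 ih2 => exact ih1.trans ih2

/-- representative of a component -/
noncomputable def rkRep (s : Setoid α) (x : α) : α := (Quotient.mk s x).out

theorem rkRep_rel (s : Setoid α) (x : α) : s (rkRep s x) x := Quotient.mk_out x

theorem rkRep_eq (s : Setoid α) {x y : α} (h : s x y) : rkRep s x = rkRep s y := by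
  unfold rkRep
  rw [Quotient.sound h]

open Classical in
/-- the images of representatives that stay in their component -/
noncomputable def rkSel (op : α → α → α) (W : Finset α) (y : α) : Finset α :=
  Finset.univ.filter (fun z => ∃ x, z = op (rkRep (rkComp op W) x) y ∧ rkComp op W z x)

theorem rk_unique {op op' : α → α → α} (h : IsRack op) (h' : IsRack op') {T : Set α}
    {W : Finset α} (hWT : ∀ w ∈ W, w ∈ T)
    (hT : ∀ t ∈ T, ∀ x, op x t = op' x t)
    (hM : ∀ w ∈ W, ∀ y, RkCl op T (op w y))
    (hS : ∀ y, rkSel op W y = rkSel op' W y)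
    (E : α → Set α) (hE : ∀ y, ∀ x ∈ E y, op x y = op' x y)
    (hWE : ∀ y, ∀ w ∈ W, w ∈ E y)
    (hRE : ∀ y x, ¬ rkComp op W (op (rkRep (rkComp op W) x) y) x →
      rkRep (rkComp op W) x ∈ E y) : op = op' := by
  have hs : rkComp op W = rkComp op' W := by
    have : RkStep op W = RkStep op' W := by
      funext a b
      apply propext
      constructor
      · rintro ⟨w, hw, rfl⟩
        exact ⟨w, hw, hT w (hWT w hw) a⟩
      · rintro ⟨w, hw, rfl⟩
        exact ⟨w, hw, (hT w (hWT w hw) a).symm⟩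
    unfold rkComp
    rw [this]
  have hrep : ∀ y x, op (rkRep (rkComp op W) x) y = op' (rkRep (rkComp op W) x) y := by
    intro y x
    by_cases hc : rkComp op W (op (rkRep (rkComp op W) x) y) x
    · have : op (rkRep (rkComp op W) x) y ∈ rkSel op W y := by
        simp only [rkSel, Finset.mem_filter, Finset.mem_univ, true_and]
        exact ⟨x, rfl, hc⟩
      rw [hS] at this
      simp only [rkSel, Finset.mem_filter, Finset.mem_univ, true_and] at this
      obtain ⟨x', h1, h2⟩ := this
      rw [← hs] at h1 h2
      have : rkRep (rkComp op W) x = rkRep (rkComp op W) x' :=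
        rkRep_eq _ (Setoid.trans' _ (Setoid.symm' _ hc) h2)
      rw [h1, this]
    · exact hE y _ (hRE y x hc)
  have key : ∀ y a b, rkComp op W a b → (op a y = op' a y ↔ op b y = op' b y) := by
    intro y a b hab
    induction hab with
    | rel a b hab =>
      obtain ⟨w, hw, rfl⟩ := hab
      have e1 : op (op a w) y = op (op a y) (op w y) := h.2 _ _ _
      have e2 : op' (op a w) y = op (op' a y) (op w y) := by
        rw [hT w (hWT w hw) a, h'.2, ← hE y w (hWE y w hw),
          (hM w hw y).agree h h' hT]
      rw [e1, e2]
      constructor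
      · intro e; rw [e]
      · intro e; exact (h.1 _).1 e
    | refl => exact Iff.rfl
    | symm _ _ _ ih => exact ih.symm
    | trans _ _ _ _ _ ih1 ih2 => exact ih1.trans ih2
  funext x y
  exact (key y _ _ (rkRep_rel (rkComp op W) x)).1 (hrep y x)

open Classical in
/-- number of distinct images -/
noncomputable def rkDeg (op : α → α → α) (v : α) : ℕ := (Finset.univ.image (fun y => op v y)).card

open Classical in
theorem rkDeg_op {op : α → α → α} (h : IsRack op) (v z : α) : rkDeg op v ≤ rkDeg op (op v z) := by
  unfold rkDeg
  apply Finset.card_le_card_of_injOn (fun u => op u z)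
  · intro u hu
    simp only [Finset.coe_image, Finset.coe_univ, Set.image_univ, Set.mem_range] at hu ⊢
    obtain ⟨y, rfl⟩ := hu
    exact ⟨op y z, (h.2 _ _ _).symm⟩
  · exact fun a _ b _ e => (h.1 z).1 e

open Classical in
/-- component as a finset -/
noncomputable def rkCls (op : α → α → α) (W : Finset α) (q : Quotient (rkComp op W)) : Finset α :=
  Finset.univ.filter (fun x => Quotient.mk _ x = q)

open Classical in
theorem rk_big (op : α → α → α) (W : Finset α) (s : ℕ) :
    (Finset.univ.filter (fun q => s ≤ (rkCls op W q).card)).card * s ≤ Fintype.card α := by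
  have h1 := Finset.card_eq_sum_card_fiberwise (s := (Finset.univ : Finset α))
    (t := (Finset.univ : Finset (Quotient (rkComp op W)))) (f := fun x => Quotient.mk _ x)
    (fun _ _ => by simp)
  rw [Finset.card_univ] at h1
  rw [h1, ← smul_eq_mul]
  refine le_trans (Finset.card_nsmul_le_sum _ (fun q => (rkCls op W q).card) s ?_) ?_
  · intro q hq
    exact (Finset.mem_filter.1 hq).2
  · exact Finset.sum_le_sum_of_subset (Finset.filter_subset _ _)

open Classical in
theorem rk_small (op : α → α → α) (W : Finset α) (t s d : ℕ)
    (hW : ∀ y, rkNum op W < rkNum op (insert y W) + t) :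
    (Finset.univ.filter (fun v => d + s ≤ rkDeg op v ∧
      (rkCls op W (Quotient.mk _ v)).card < s)).card * d ≤ Fintype.card α * (2 * t * s) := by
  set U := Finset.univ.filter (fun v => d + s ≤ rkDeg op v ∧
      (rkCls op W (Quotient.mk _ v)).card < s) with hU
  refine Finset.card_mul_le_card_mul (s := U) (t := (Finset.univ : Finset α))
    (fun v y => ¬ rkComp op W (op v y) v) ?_ ?_
  · intro v hv
    obtain ⟨h1, h2⟩ := (Finset.mem_filter.1 hv).2
    have : rkDeg op v ≤ (rkCls op W (Quotient.mk _ v)).card +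
        (Finset.univ.filter (fun y => ¬ rkComp op W (op v y) v)).card := by
      unfold rkDeg
      have hsub : Finset.univ.image (fun y => op v y) ⊆ rkCls op W (Quotient.mk _ v) ∪
          (Finset.univ.filter (fun y => ¬ rkComp op W (op v y) v)).image (fun y => op v y) := by
        intro u hu
        obtain ⟨y, -, rfl⟩ := Finset.mem_image.1 hu
        by_cases hc : rkComp op W (op v y) v
        · apply Finset.mem_union_left
          simp only [rkCls, Finset.mem_filter, Finset.mem_univ, true_and]
          exact Quotient.sound hc
        · apply Finset.mem_union_right
          exact Finset.mem_image.2 ⟨y, by simp [hc], rfl⟩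
      refine (Finset.card_le_card hsub).trans ((Finset.card_union_le _ _).trans ?_)
      exact Nat.add_le_add_left Finset.card_image_le _
    have h3 : d ≤ (Finset.univ.filter (fun y => ¬ rkComp op W (op v y) v)).card := by omega
    exact h3
  · intro y _
    obtain ⟨B, hB, hB2⟩ := rk_moved op W t y (hW y)
    unfold Finset.bipartiteBelow
    have : (U.filter (fun v => ¬ rkComp op W (op v y) v)).card ≤ s * B.card := by
      refine Finset.card_le_mul_card_image_of_maps_to (f := fun v => Quotient.mk _ v) ?_ s ?_
      · intro v hv
        exact hB2 v (Finset.mem_filter.1 hv).2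
      · intro q hq
        rcases Finset.eq_empty_or_nonempty ((U.filter
          (fun v => ¬ rkComp op W (op v y) v)).filter (fun v => Quotient.mk _ v = q)) with he | ⟨v, hv⟩
        · rw [he]; simp
        · simp only [Finset.mem_filter, hU, Finset.mem_univ, true_and] at hv
          obtain ⟨⟨⟨-, h2⟩, -⟩, rfl⟩ := hv
          refine le_trans (Finset.card_le_card ?_) h2.le
          intro u hu
          simp only [rkCls, Finset.mem_filter, Finset.mem_univ, true_and]
          exact (Finset.mem_filter.1 hu).2
    calc _ ≤ s * B.card := this
      _ ≤ s * (2 * t) := Nat.mul_le_mul_left _ hB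
      _ = 2 * t * s := mul_comm _ _

open Classical in
theorem rk_exists {op : α → α → α} (h : IsRack op) (l : ℕ) (hl : 1 ≤ l) :
    ∃ W T : Finset α, W ⊆ T ∧ T.card ≤ 5 * (Fintype.card α / l ^ 2) ∧
      (∀ w ∈ W, ∀ y, RkCl op (T : Set α) (op w y)) ∧
      ∀ y, ∃ E : Finset α, E.card ≤ 6 * l ^ 8 + Fintype.card α / l ^ 2 ∧ W ⊆ E ∧
        ∀ x, ¬ rkComp op W (op (rkRep (rkComp op W) x) y) x → rkRep (rkComp op W) x ∈ E := by
  set n := Fintype.card α with hn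
  have hpos : ∀ k, 1 ≤ l ^ k := fun k => Nat.one_le_pow _ _ hl
  obtain ⟨V, hV1, hV2⟩ := rk_greedy op (l ^ 2) (hpos 2)
  obtain ⟨W, hW1, hW2⟩ := rk_greedy op (3 * l ^ 8) (by have := hpos 8; omega)
  set s := l ^ 2 with hs
  set d := 2 * l ^ 6 with hd
  set U := Finset.univ.filter (fun v => d + s ≤ rkDeg op v ∧
      (rkCls op V (Quotient.mk _ v)).card < s) with hU
  set R := (Finset.univ.filter (fun q => s ≤ (rkCls op V q).card)).image Quotient.out with hR
  set M := (W.filter (fun w => rkDeg op w < d + s)).biUnion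
    (fun w => Finset.univ.image (fun y => op w y)) with hM
  have cV : V.card ≤ n / l ^ 2 := (Nat.le_div_iff_mul_le (hpos 2)).2 hV1
  have cW : W.card ≤ n / l ^ 2 := by
    refine (Nat.le_div_iff_mul_le (hpos 2)).2 (le_trans ?_ hW1)
    have : l ^ 2 ≤ l ^ 8 := Nat.pow_le_pow_right hl (by norm_num)
    exact Nat.mul_le_mul_left _ (by omega)
  have cR : R.card ≤ n / l ^ 2 := by
    refine (Nat.le_div_iff_mul_le (hpos 2)).2 (le_trans ?_ (rk_big op V s))
    exact Nat.mul_le_mul_right _ Finset.card_image_le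
  have cU : U.card ≤ n / l ^ 2 := by
    refine (Nat.le_div_iff_mul_le (hpos 2)).2 ?_
    have h1 := rk_small op V (l ^ 2) s d hV2
    rw [← hU, ← hn] at h1
    have h2 : U.card * l ^ 2 * (2 * l ^ 4) ≤ n * (2 * l ^ 4) := by
      calc U.card * l ^ 2 * (2 * l ^ 4) = U.card * d := by rw [hd]; ring
        _ ≤ _ := h1
        _ = n * (2 * l ^ 4) := by rw [hs]; ring
    exact Nat.le_of_mul_le_mul_right h2 (by have := hpos 4; omega)
  have cM : M.card ≤ n / l ^ 2 := by
    refine (Nat.le_div_iff_mul_le (hpos 2)).2 ?_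
    have h1 : M.card ≤ W.card * (3 * l ^ 6) := by
      refine le_trans Finset.card_biUnion_le ?_
      refine le_trans (Finset.sum_le_card_nsmul _ _ (3 * l ^ 6) ?_) ?_
      · intro w hw
        have h2 := (Finset.mem_filter.1 hw).2
        have h3 : s ≤ l ^ 6 := Nat.pow_le_pow_right hl (by norm_num)
        have h4 : (Finset.univ.image (fun y => op w y)).card < d + s := h2
        omega
      · rw [smul_eq_mul]
        exact Nat.mul_le_mul_right _ (Finset.card_filter_le _ _)
    calc M.card * l ^ 2 ≤ W.card * (3 * l ^ 6) * l ^ 2 := Nat.mul_le_mul_right _ h1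
      _ = W.card * (3 * l ^ 8) := by ring
      _ ≤ n := hW1
  refine ⟨W, W ∪ V ∪ R ∪ U ∪ M, ?_, ?_, ?_, ?_⟩
  · intro w hw
    simp [hw]
  · have e1 := Finset.card_union_le (W ∪ V ∪ R ∪ U) M
    have e2 := Finset.card_union_le (W ∪ V ∪ R) U
    have e3 := Finset.card_union_le (W ∪ V) R
    have e4 := Finset.card_union_le W V
    rw [← hs] at cV cW cR cU cM
    omega
  · intro w hw y
    by_cases hdeg : rkDeg op w < d + s
    · apply RkCl.base
      have : op w y ∈ M := by
        rw [hM, Finset.mem_biUnion]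
        exact ⟨w, Finset.mem_filter.2 ⟨hw, hdeg⟩, Finset.mem_image.2 ⟨y, Finset.mem_univ _, rfl⟩⟩
      simp [this]
    · have hdeg2 : d + s ≤ rkDeg op (op w y) := le_trans (not_lt.1 hdeg) (rkDeg_op h w y)
      by_cases hc : (rkCls op V (Quotient.mk _ (op w y))).card < s
      · apply RkCl.base
        have : op w y ∈ U := Finset.mem_filter.2 ⟨Finset.mem_univ _, hdeg2, hc⟩
        simp [this]
      · have hVT : ∀ v ∈ V, v ∈ ((W ∪ V ∪ R ∪ U ∪ M : Finset α) : Set α) := by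
          intro v hv
          simp [hv]
        refine (RkCl.of_comp hVT (rkRep_rel (rkComp op V) (op w y))).1 ?_
        apply RkCl.base
        have : rkRep (rkComp op V) (op w y) ∈ R := by
          rw [hR]
          exact Finset.mem_image.2 ⟨_, Finset.mem_filter.2 ⟨Finset.mem_univ _, not_lt.1 hc⟩, rfl⟩
        simp [this]
  · intro y
    obtain ⟨B, hB, hB2⟩ := rk_moved op W _ y (hW2 y)
    refine ⟨W ∪ B.image Quotient.out, ?_, Finset.subset_union_left, ?_⟩
    · have e1 := Finset.card_union_le W (B.image Quotient.out)
      have e2 : (B.image Quotient.out).card ≤ B.card := Finset.card_image_le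
      rw [← hs] at cW
      omega
    · intro x hx
      apply Finset.mem_union_right
      have hr := rkRep_rel (rkComp op W) x
      have := hB2 (rkRep (rkComp op W) x) (fun hc => hx (Setoid.trans' _ hc hr))
      rw [Quotient.sound hr] at this
      exact Finset.mem_image.2 ⟨_, this, rfl⟩

theorem rk_enum [Nonempty α] (E : Finset α) (k : ℕ) (hk : E.card ≤ k) :
    ∃ e : Fin k → α, ∀ x ∈ E, x ∈ Set.range e := by
  classical
  obtain ⟨a⟩ := ‹Nonempty α›
  refine ⟨fun i => if hi : i.1 < E.card then (E.equivFin.symm ⟨i.1, hi⟩ : α) else a, ?_⟩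
  intro x hx
  refine ⟨⟨(E.equivFin ⟨x, hx⟩).1, lt_of_lt_of_le (E.equivFin ⟨x, hx⟩).2 hk⟩, ?_⟩
  simp

end RackCount

/-- codes -/
abbrev RkCode (n K k : ℕ) : Type :=
  Finset (Fin n) × (Fin K → Fin n) × (Fin K → Fin n → Fin n) × (Fin n → Finset (Fin n)) ×
    (Fin n → Fin k → Fin n) × (Fin n → Fin k → Fin n)

theorem rk_count (n : ℕ) (hn : 1 ≤ n) (l : ℕ) (hl : 1 ≤ l) :
    numRack n ≤ Fintype.card (RkCode n (5 * (n / l ^ 2)) (6 * l ^ 8 + n / l ^ 2)) := by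
  have : Nonempty (Fin n) := ⟨⟨0, hn⟩⟩
  have key : ∀ r : {op : Fin n → Fin n → Fin n // IsRack op},
      ∃ (W : Finset (Fin n)) (τ : Fin (5 * (n / l ^ 2)) → Fin n)
        (e : Fin n → Fin (6 * l ^ 8 + n / l ^ 2) → Fin n),
        (∀ w ∈ W, w ∈ Set.range τ) ∧ (∀ w ∈ W, ∀ y, RkCl r.1 (Set.range τ) (r.1 w y)) ∧
        (∀ y, ∀ w ∈ W, w ∈ Set.range (e y)) ∧
        (∀ y x, ¬ rkComp r.1 W (r.1 (rkRep (rkComp r.1 W) x) y) x →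
          rkRep (rkComp r.1 W) x ∈ Set.range (e y)) := by
    rintro ⟨op, h⟩
    obtain ⟨W, T, h1, h2, h3, h4⟩ := rk_exists h l hl
    simp only [Fintype.card_fin] at h2 h4
    obtain ⟨τ, hτ⟩ := rk_enum T _ h2
    choose E hE1 hE2 hE3 using h4
    choose e he using fun y => rk_enum (E y) _ (hE1 y)
    exact ⟨W, τ, e, fun w hw => hτ w (h1 hw), fun w hw y => (h3 w hw y).mono hτ,
      fun y w hw => he y w (hE2 y hw), fun y x hx => he y _ (hE3 y x hx)⟩
  choose W τ e h1 h2 h3 h4 using key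
  let F : {op : Fin n → Fin n → Fin n // IsRack op} →
      RkCode n (5 * (n / l ^ 2)) (6 * l ^ 8 + n / l ^ 2) := fun r =>
    (W r, τ r, fun i x => r.1 x (τ r i), fun y => rkSel r.1 (W r) y, e r,
      fun y i => r.1 (e r y i) y)
  have hF : Function.Injective F := by
    intro r r' hrr
    simp only [F, Prod.mk.injEq] at hrr
    obtain ⟨a1, a2, a3, a4, a5, a6⟩ := hrr
    apply Subtype.ext
    refine rk_unique r.2 r'.2 (T := Set.range (τ r)) (W := W r) (h1 r) ?_ (h2 r) ?_
      (fun y => Set.range (e r y)) ?_ (h3 r) (h4 r)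
    · rintro _ ⟨i, rfl⟩ x
      have := congrFun (congrFun a3 i) x
      rw [← a2] at this
      exact this
    · intro y
      have := congrFun a4 y
      rw [← a1] at this
      exact this
    · rintro y _ ⟨i, rfl⟩
      have := congrFun (congrFun a6 y) i
      rw [← a5] at this
      exact this
  calc numRack n ≤ Nat.card {op : Fin n → Fin n → Fin n // IsRack op} :=
        Nat.card_le_card_of_surjective _ Quot.mk_surjective
    _ ≤ Nat.card (RkCode n (5 * (n / l ^ 2)) (6 * l ^ 8 + n / l ^ 2)) :=
        Nat.card_le_card_of_injective F hF
    _ = _ := Nat.card_eq_fintype_card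

theorem rk_card (n K k l : ℕ) (hl : n ≤ 2 ^ l) :
    Fintype.card (RkCode n K k) ≤ 2 ^ (n + n * n + l * (K + n * K + 2 * (n * k))) := by
  have e : Fintype.card (RkCode n K k) =
      2 ^ (n + n * n) * n ^ (K + n * K + 2 * (n * k)) := by
    simp only [RkCode, Fintype.card_prod, Fintype.card_finset, Fintype.card_pi,
      Fintype.card_fin, Finset.prod_const, Finset.card_univ]
    rw [← pow_mul, ← pow_mul, ← pow_mul]
    ring
  rw [e, pow_add 2 (n + n * n), pow_mul 2 l]
  exact Nat.mul_le_mul_left _ (Nat.pow_le_pow_left hl _)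

theorem rk_asymp : ∃ N : ℕ, ∀ n : ℕ, N ≤ n → ∃ l : ℕ, 32 ≤ l ∧ n ≤ 2 ^ l ∧ 96 * l ^ 9 ≤ n := by
  have h1 : Filter.Tendsto (fun l : ℕ => (l : ℝ) ^ 9 / (2 : ℝ) ^ l) Filter.atTop (nhds 0) :=
    tendsto_pow_const_div_const_pow_of_one_lt 9 (by norm_num)
  have h2 := h1.eventually (gt_mem_nhds (show (0 : ℝ) < 1 / 192 by norm_num))
  obtain ⟨L, hL⟩ := Filter.eventually_atTop.1 h2
  refine ⟨2 ^ (max L 32), fun n hn => ⟨Nat.log 2 n + 1, ?_, (Nat.lt_pow_succ_log_self (by norm_num) n).le, ?_⟩⟩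
  · have : 32 ≤ Nat.log 2 n := Nat.le_log_of_pow_le (by norm_num)
      (le_trans (Nat.pow_le_pow_right (by norm_num) (le_max_right _ _)) hn)
    omega
  · have hlog : L ≤ Nat.log 2 n := Nat.le_log_of_pow_le (by norm_num)
      (le_trans (Nat.pow_le_pow_right (by norm_num) (le_max_left _ _)) hn)
    have h3 := hL (Nat.log 2 n + 1) (by omega)
    have hn0 : n ≠ 0 := by
      have : 0 < 2 ^ (max L 32) := by positivity
      omega
    have h4 : 2 ^ Nat.log 2 n ≤ n := Nat.pow_log_le_self 2 hn0
    rw [div_lt_iff₀ (by positivity)] at h3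
    have h4' : (2 : ℝ) ^ Nat.log 2 n ≤ n := by exact_mod_cast h4
    rw [pow_succ (2 : ℝ)] at h3
    have h5 : (96 : ℝ) * ((Nat.log 2 n + 1 : ℕ) : ℝ) ^ 9 ≤ n := by linarith
    exact_mod_cast h5

theorem rk_exp (n l : ℕ) (hl : 32 ≤ l) (h : 96 * l ^ 9 ≤ n) :
    2 * (n + n * n + l * (5 * (n / l ^ 2) + n * (5 * (n / l ^ 2)) +
      2 * (n * (6 * l ^ 8 + n / l ^ 2)))) ≤ 3 * n ^ 2 := by
  set q := n / l ^ 2 with hq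
  have h1 : q * l ^ 2 ≤ n := Nat.div_mul_le_self _ _
  have h2 : 32 * (q * l) ≤ n := by nlinarith [Nat.mul_le_mul_left (q * l) hl]
  have h3 : 32 ≤ n := by
    have : l ^ 1 ≤ l ^ 9 := Nat.pow_le_pow_right (by omega) (by norm_num)
    rw [pow_one] at this
    omega
  have e : 2 * (n + n * n + l * (5 * q + n * (5 * q) + 2 * (n * (6 * l ^ 8 + q)))) =
    2 * n + 2 * n ^ 2 + 10 * (q * l) + 14 * n * (q * l) + 24 * l ^ 9 * n := by ring
  rw [e]
  nlinarith [Nat.mul_le_mul_left n h2, Nat.mul_le_mul_left n h, Nat.mul_le_mul_left n h3]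

theorem rk_const : (3 / 2 : ℝ) ≤ 1 / 6 * Real.logb 2 24 + 1 / 2 * Real.logb 2 3 := by
  have h1 : (9 / 2 : ℝ) ≤ Real.logb 2 24 := by
    have : Real.logb 2 (2 ^ 9) ≤ Real.logb 2 (24 ^ 2) :=
      Real.logb_le_logb_of_le (by norm_num) (by norm_num) (by norm_num)
    rw [Real.logb_pow, Real.logb_pow, Real.logb_self_eq_one (by norm_num)] at this
    push_cast at this
    linarith
  have h2 : (3 / 2 : ℝ) ≤ Real.logb 2 3 := by
    have : Real.logb 2 (2 ^ 3) ≤ Real.logb 2 (3 ^ 2) :=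
      Real.logb_le_logb_of_le (by norm_num) (by norm_num) (by norm_num)
    rw [Real.logb_pow, Real.logb_pow, Real.logb_self_eq_one (by norm_num)] at this
    push_cast at this
    linarith
  linarith

/-- The number of isomorphism classes of racks of order `n` is at most
`2 ^ ((c + ε) n²)` for all sufficiently large `n`, where
`c = (1/6) log₂ 24 + (1/2) log₂ 3`. -/
theorem rack_upper_bound (ε : ℝ) (hε : 0 < ε) :
    ∃ N : ℕ, ∀ n : ℕ, N ≤ n →
      (numRack n : ℝ) ≤
        (2 : ℝ) ^ ((1 / 6 * Real.logb 2 24 + 1 / 2 * Real.logb 2 3 + ε) * (n : ℝ) ^ 2) := by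
  obtain ⟨N, hN⟩ := rk_asymp
  refine ⟨N, fun n hn => ?_⟩
  obtain ⟨l, hl, h1, h2⟩ := hN n hn
  have hn1 : 1 ≤ n := by
    have : 1 ≤ l ^ 9 := Nat.one_le_pow _ _ (by omega)
    omega
  have h3 := (rk_count n hn1 l (by omega)).trans (rk_card n _ _ l h1)
  have h4 := rk_exp n l hl h2
  set X := n + n * n + l * (5 * (n / l ^ 2) + n * (5 * (n / l ^ 2)) +
      2 * (n * (6 * l ^ 8 + n / l ^ 2))) with hX
  have h3' : (numRack n : ℝ) ≤ (2 : ℝ) ^ X := by exact_mod_cast h3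
  refine h3'.trans ?_
  rw [← Real.rpow_natCast]
  apply Real.rpow_le_rpow_of_exponent_le (by norm_num)
  have h4' : 2 * (X : ℝ) ≤ 3 * (n : ℝ) ^ 2 := by exact_mod_cast h4
  nlinarith [rk_const, sq_nonneg (n : ℝ)]
end

section
/- (Pyber) For every ε > 0 there exists N such that for all integers n ≥ N, the number of subgroups of the symmetric group on n points is at most 24^((1/6 + ε) n²). -/
section

open Subgroup

/-- No prime above `D` divides `m`. -/
def PybSmooth (D m : ℕ) : Prop := ∀ p : ℕ, p.Prime → D < p → ¬ p ∣ m

/-- There are `r` elements generating a subgroup whose index has no prime factor above `D`. -/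
def PybGood (D : ℕ) (G : Type) [Group G] (r : ℕ) : Prop :=
  ∃ X : Finset G, X.card ≤ r ∧ PybSmooth D (closure (X : Set G)).index

theorem PybSmooth.mul {D a b : ℕ} (ha : PybSmooth D a) (hb : PybSmooth D b) :
    PybSmooth D (a * b) := by
  intro p hp hD h
  rcases (hp.dvd_mul).1 h with h | h
  · exact ha p hp hD h
  · exact hb p hp hD h

theorem PybSmooth.of_dvd {D a b : ℕ} (hb : PybSmooth D b) (h : a ∣ b) : PybSmooth D a :=
  fun p hp hD hpa => hb p hp hD (hpa.trans h)

theorem PybGood.mono {D : ℕ} {G : Type} [Group G] {r s : ℕ} (h : PybGood D G r) (hrs : r ≤ s) :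
    PybGood D G s := by
  obtain ⟨X, h1, h2⟩ := h
  exact ⟨X, h1.trans hrs, h2⟩

theorem pyb_add_one {G : Type} [Group G] [Finite G] (K : Subgroup G) (p : ℕ) (hp : p.Prime)
    (h : p ∣ K.index) : ∃ y : G, (K ⊔ zpowers y).index * p ∣ K.index := by
  classical
  have : Fact p.Prime := ⟨hp⟩
  obtain ⟨Q⟩ : Nonempty (Sylow p K) := inferInstance
  obtain ⟨a, ha⟩ := (IsPGroup.iff_card (p := p)).1 Q.2
  set Q' : Subgroup G := (Q : Subgroup K).map K.subtype with hQ'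
  have hcQ' : Nat.card Q' = p ^ a := by
    rw [hQ', Subgroup.card_map_of_injective K.subtype_injective]
    exact ha
  have hKc : Nat.card K = p ^ a * (Q : Subgroup K).index := by
    rw [← ha]; exact (Subgroup.card_mul_index _).symm
  have hdvd : p ^ (a + 1) ∣ Nat.card G := by
    rw [← K.card_mul_index, pow_succ]
    exact mul_dvd_mul (hKc ▸ Dvd.intro _ rfl) h
  obtain ⟨R, hR, hQR⟩ := Sylow.exists_subgroup_card_pow_succ (p := p) hdvd hcQ'
  have hlt : p ^ a < p ^ (a + 1) := Nat.pow_lt_pow_right hp.one_lt (by omega)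
  have hne : ∃ y ∈ R, y ∉ Q' := by
    by_contra hcon
    push Not at hcon
    have : R = Q' := le_antisymm hcon hQR
    rw [this, hcQ'] at hR
    omega
  obtain ⟨y, hyR, hyQ⟩ := hne
  refine ⟨y, ?_⟩
  have hle : K ≤ K ⊔ zpowers y := le_sup_left
  have hQK : Q' ≤ K := by
    rintro _ ⟨z, -, rfl⟩
    exact z.2
  rw [← Subgroup.relIndex_mul_index hle, mul_comm]
  apply mul_dvd_mul_right
  by_contra hnd
  have h1 : Q' ⊔ zpowers y ≤ R := sup_le hQR (by simpa using hyR)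
  have h2 : Nat.card (Q' ⊔ zpowers y : Subgroup G) ∣ p ^ (a + 1) := hR ▸ Subgroup.card_dvd_of_le h1
  obtain ⟨j, hj, hj2⟩ := (Nat.dvd_prime_pow hp).1 h2
  have h3 : j = a + 1 := by
    by_contra hjne
    have hja : j ≤ a := by omega
    have h4 : Nat.card (Q' ⊔ zpowers y : Subgroup G) ≤ Nat.card Q' := by
      rw [hj2, hcQ']
      exact Nat.pow_le_pow_right hp.pos hja
    have h5 : Q' = Q' ⊔ zpowers y := Subgroup.eq_of_le_of_card_ge le_sup_left h4
    apply hyQ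
    rw [h5]
    exact (le_sup_right : zpowers y ≤ Q' ⊔ zpowers y) (mem_zpowers y)
  have h6 : p ^ (a + 1) ∣ Nat.card (K ⊔ zpowers y : Subgroup G) := by
    rw [← h3, ← hj2]
    exact Subgroup.card_dvd_of_le (sup_le_sup_right hQK _)
  rw [← Subgroup.relIndex_bot_left, ← Subgroup.relIndex_mul_relIndex _ _ _ bot_le hle,
    Subgroup.relIndex_bot_left] at h6
  have h7 : p ^ (a + 1) ∣ Nat.card K :=
    (Nat.Coprime.pow_left _ ((Nat.Prime.coprime_iff_not_dvd hp).2 hnd)).dvd_of_dvd_mul_right h6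
  rw [hKc, pow_succ] at h7
  have h8 : p ∣ (Q : Subgroup K).index := Nat.dvd_of_mul_dvd_mul_left (pow_pos hp.pos a) h7
  exact Q.not_dvd_index h8

theorem pyb_extend {G : Type} [Group G] [Finite G] {D : ℕ} (hD : 0 < D) (k : ℕ) :
    ∀ (K : Subgroup G) (u v : ℕ), K.index = u * v → PybSmooth D u → v ≤ D ^ k →
      ∃ X : Finset G, X.card ≤ k ∧ PybSmooth D (K ⊔ closure (X : Set G)).index := by
  classical
  induction k with
  | zero =>
    intro K u v h hu hv
    refine ⟨∅, by simp, ?_⟩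
    have hv0 : v ≠ 0 := by
      rintro rfl
      exact K.index_ne_zero_of_finite (by simpa using h)
    have : v = 1 := by simp at hv; omega
    subst this
    simpa [h] using hu
  | succ k ih =>
    intro K u v h hu hv
    by_cases hs : PybSmooth D K.index
    · exact ⟨∅, by simp, by simpa using hs⟩
    · unfold PybSmooth at hs
      push Not at hs
      obtain ⟨p, hp, hDp, hpd⟩ := hs
      obtain ⟨y, hy⟩ := pyb_add_one K p hp hpd
      have hpv : p ∣ v := by
        rw [h] at hpd
        exact ((hp.dvd_mul).1 hpd).resolve_left (hu p hp hDp)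
      obtain ⟨w, rfl⟩ := hpv
      have hw0 : w ≠ 0 := by
        rintro rfl
        exact K.index_ne_zero_of_finite (by simpa using h)
      have h1 : (K ⊔ zpowers y).index ∣ u * w := by
        have : (K ⊔ zpowers y).index * p ∣ (u * w) * p := by
          rw [h] at hy
          convert hy using 1
          ring
        exact Nat.dvd_of_mul_dvd_mul_right hp.pos this
      obtain ⟨u', v', hu', hv', huv⟩ := (Nat.dvd_mul).1 h1
      have hvk : v' ≤ D ^ k := by
        have h2 : v' ≤ w := Nat.le_of_dvd (Nat.pos_of_ne_zero hw0) hv'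
        refine h2.trans ?_
        have h3 : D * w ≤ D * D ^ k := by
          calc D * w ≤ p * w := Nat.mul_le_mul_right _ hDp.le
            _ ≤ D ^ (k + 1) := hv
            _ = D * D ^ k := by ring
        exact Nat.le_of_mul_le_mul_left h3 hD
      obtain ⟨X, hX, hXs⟩ := ih (K ⊔ zpowers y) u' v' huv.symm (hu.of_dvd hu') hvk
      refine ⟨insert y X, (Finset.card_insert_le _ _).trans (by omega), ?_⟩
      convert hXs using 2
      rw [Finset.coe_insert, Set.insert_eq, Subgroup.closure_union, ← Subgroup.zpowers_eq_closure, sup_assoc]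

theorem PybGood.of_subgroup {G : Type} [Group G] [Finite G] {D : ℕ} (hD : 0 < D) (H : Subgroup G)
    {r k u v : ℕ} (h : PybGood D H r) (hi : H.index = u * v) (hu : PybSmooth D u)
    (hv : v ≤ D ^ k) : PybGood D G (r + k) := by
  classical
  obtain ⟨X, hX, hXs⟩ := h
  set K : Subgroup G := (closure (X : Set H)).map H.subtype with hK
  have hKi : K.index = ((closure (X : Set H)).index * u) * v := by
    rw [hK, Subgroup.index_map_subtype, hi, mul_assoc]
  obtain ⟨Y, hY, hYs⟩ := pyb_extend hD k K _ v hKi (hXs.mul hu) hv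
  refine ⟨X.image H.subtype ∪ Y, ?_, ?_⟩
  · refine (Finset.card_union_le _ _).trans (add_le_add (Finset.card_image_le.trans hX) hY)
  · convert hYs using 2
    rw [Finset.coe_union, Subgroup.closure_union, hK, MonoidHom.map_closure]
    simp

theorem PybGood.of_hom {G G' : Type} [Group G] [Finite G] [Group G'] {D : ℕ} (φ : G →* G')
    {r s : ℕ} (h1 : PybGood D φ.range r) (h2 : PybGood D φ.ker s) : PybGood D G (r + s) := by
  classical
  obtain ⟨X, hX, hXs⟩ := h1
  obtain ⟨Y, hY, hYs⟩ := h2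
  have hsurj := φ.rangeRestrict_surjective
  set f := Function.surjInv hsurj with hf
  have hff : ∀ x, φ.rangeRestrict (f x) = x := Function.surjInv_eq hsurj
  refine ⟨X.image f ∪ Y.image φ.ker.subtype, ?_, ?_⟩
  · exact (Finset.card_union_le _ _).trans
      (add_le_add (Finset.card_image_le.trans hX) (Finset.card_image_le.trans hY))
  · set K := closure ((X.image f ∪ Y.image φ.ker.subtype : Finset G) : Set G) with hK
    have hKX : (closure (X : Set φ.range)) ≤ K.map φ.rangeRestrict := by
      rw [Subgroup.closure_le]
      intro x hx
      refine ⟨f x, Subgroup.subset_closure ?_, hff x⟩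
      simp only [Finset.coe_union, Finset.coe_image]
      exact Or.inl ⟨x, hx, rfl⟩
    have hKY : (closure (Y : Set φ.ker)).map φ.ker.subtype ≤ K := by
      rw [MonoidHom.map_closure, Subgroup.closure_le]
      intro y hy
      apply Subgroup.subset_closure
      simp only [Finset.coe_union, Finset.coe_image]
      exact Or.inr hy
    have e1 : (K.map φ.rangeRestrict).index = (K ⊔ φ.ker).index := by
      rw [Subgroup.index_map, MonoidHom.ker_rangeRestrict, MonoidHom.range_eq_top.2 hsurj]
      simp
    have e2 : K.index = K.relIndex φ.ker * (K ⊔ φ.ker).index := by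
      have t1 : φ.ker.relIndex K * (K ⊔ φ.ker).index = φ.ker.index := by
        rw [← Subgroup.relIndex_sup_right K φ.ker]
        exact Subgroup.relIndex_mul_index le_sup_right
      have t2 : K.relIndex φ.ker * φ.ker.index = φ.ker.relIndex K * K.index := by
        rw [← Subgroup.inf_relIndex_right K φ.ker, ← Subgroup.inf_relIndex_left K φ.ker,
          Subgroup.relIndex_mul_index inf_le_right, Subgroup.relIndex_mul_index inf_le_left]
      have t3 : φ.ker.relIndex K ≠ 0 := (φ.ker.subgroupOf K).index_ne_zero_of_finite
      apply Nat.eq_of_mul_eq_mul_left (Nat.pos_of_ne_zero t3)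
      rw [← t2, ← t1]
      ring
    rw [e2]
    refine PybSmooth.mul (hYs.of_dvd ?_) (hXs.of_dvd ?_)
    · rw [Subgroup.relIndex]
      apply Subgroup.index_dvd_of_le
      rw [← Subgroup.map_subtype_le_map_subtype, Subgroup.subgroupOf_map_subtype]
      refine le_inf hKY ?_
      rintro _ ⟨z, -, rfl⟩
      exact z.2
    · rw [← e1]
      exact Subgroup.index_dvd_of_le hKX

theorem PybGood.of_smooth_card {G : Type} [Group G] {D : ℕ} (h : PybSmooth D (Nat.card G)) (r : ℕ) :
    PybGood D G r :=
  ⟨∅, by simp, by simpa using h⟩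

end

section

open Subgroup MulAction

theorem pyb_zpowers_pgroup {G : Type} [Group G] {p : ℕ} (hp : p.Prime) {g : G} {k : ℕ}
    (hg : g ^ p ^ k = 1) : IsPGroup p (zpowers g) := by
  have : Fact p.Prime := ⟨hp⟩
  intro h
  obtain ⟨h, i, rfl⟩ := h
  refine ⟨k, Subtype.ext ?_⟩
  simp only [SubgroupClass.coe_pow, OneMemClass.coe_one]
  change (g ^ i) ^ p ^ k = 1
  rw [← zpow_natCast, ← zpow_mul, mul_comm, zpow_mul, zpow_natCast, hg, one_zpow]

theorem pyb_orbit_dichotomy {G Ω : Type} [Group G] [MulAction G Ω] [Finite Ω] {p : ℕ}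
    (hp : p.Prime) {P : Subgroup G} (hP : IsPGroup p P) (x : Ω) :
    (∀ g ∈ P, g • x = x) ∨ ∃ n, 0 < n ∧ (orbit P x).ncard = p ^ n := by
  have : Fact p.Prime := ⟨hp⟩
  obtain ⟨n, hn⟩ := hP.card_orbit x
  rcases Nat.eq_zero_or_pos n with rfl | hpos
  · left
    intro g hg
    rw [pow_zero] at hn
    have hss : Subsingleton (orbit P x) := (Nat.card_eq_one_iff_unique.1 hn).1
    have := hss.elim ⟨g • x, mem_orbit x (⟨g, hg⟩ : P)⟩ ⟨x, mem_orbit_self x⟩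
    exact congrArg Subtype.val this
  · right
    exact ⟨n, hpos, by rw [← Nat.card_coe_set_eq]; exact hn⟩

theorem pyb_orbit_dichotomy' {G Ω : Type} [Group G] [MulAction G Ω] [Finite Ω] {p : ℕ}
    (hp : p.Prime) {P : Subgroup G} (hP : IsPGroup p P) (x : Ω) :
    (∀ g ∈ P, g • x = x) ∨ p ≤ (orbit P x).ncard := by
  rcases pyb_orbit_dichotomy hp hP x with h | ⟨n, h0, hn⟩
  · exact Or.inl h
  · right
    rw [hn]
    exact Nat.le_self_pow (by omega) p

theorem pyb_fix_of_small {G Ω : Type} [Group G] [MulAction G Ω] [Finite Ω] {p : ℕ}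
    (hp : p.Prime) {g : G} {k : ℕ} (hg : g ^ p ^ k = 1) (B : Set Ω) (hB : ∀ y ∈ B, g • y ∈ B)
    (hc : B.ncard < p) {x : Ω} (hx : x ∈ B) : g • x = x := by
  rcases pyb_orbit_dichotomy' hp (pyb_zpowers_pgroup hp hg) x with h | h
  · exact h g (mem_zpowers g)
  · exfalso
    have hfin : IsOfFinOrder g := isOfFinOrder_iff_pow_eq_one.2 ⟨_, pow_pos hp.pos k, hg⟩
    have hpow : ∀ i : ℕ, ∀ y ∈ B, g ^ i • y ∈ B := by
      intro i
      induction i with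
      | zero => intro y hy; simpa using hy
      | succ i ih => intro y hy; rw [pow_succ, mul_smul]; exact ih _ (hB y hy)
    have hsub : orbit (zpowers g) x ⊆ B := by
      rintro _ ⟨⟨h, hh⟩, rfl⟩
      obtain ⟨i, rfl⟩ := (hfin.mem_powers_iff_mem_zpowers).2 hh
      exact hpow i x hx
    have := Set.ncard_le_ncard hsub
    omega

/-- Elements of prime power order for a prime above `D`. -/
def PybBig {G : Type} [Group G] (D : ℕ) (g : G) : Prop :=
  ∃ p : ℕ, p.Prime ∧ D < p ∧ ∃ k : ℕ, g ^ p ^ k = 1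

/-- The subgroup generated by the big prime power elements of `A`. -/
def PybO {G : Type} [Group G] (D : ℕ) (A : Subgroup G) : Subgroup G :=
  closure {g | g ∈ A ∧ PybBig D g}

/-- The action is faithful on elements of big prime order. -/
def PybDF (D : ℕ) (G Ω : Type) [Group G] [MulAction G Ω] : Prop :=
  ∀ (g : G) (p : ℕ), p.Prime → D < p → orderOf g = p → ∃ x : Ω, g • x ≠ x

theorem pybO_le {G : Type} [Group G] (D : ℕ) (A : Subgroup G) : PybO D A ≤ A :=
  (Subgroup.closure_le _).2 (fun _ h => h.1)

theorem pybO_smooth {G : Type} [Group G] [Finite G] (D : ℕ) (A : Subgroup G) :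
    PybSmooth D ((PybO D A).relIndex A) := by
  intro p hp hD hdvd
  have : Fact p.Prime := ⟨hp⟩
  obtain ⟨P⟩ : Nonempty (Sylow p A) := inferInstance
  have hle : (P : Subgroup A) ≤ (PybO D A).subgroupOf A := by
    intro g hg
    rw [Subgroup.mem_subgroupOf]
    apply Subgroup.subset_closure
    refine ⟨g.2, p, hp, hD, ?_⟩
    obtain ⟨k, hk⟩ := P.2 ⟨g, hg⟩
    refine ⟨k, ?_⟩
    have := congrArg Subtype.val (congrArg Subtype.val hk)
    simpa using this
  exact P.not_dvd_index (hdvd.trans (Subgroup.index_dvd_of_le hle))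

theorem pybO_orbit {G Ω : Type} [Group G] [MulAction G Ω] [Finite Ω] (D : ℕ) (A : Subgroup G)
    (x : Ω) : (∀ g ∈ PybO D A, g • x = x) ∨ D < (orbit (PybO D A) x).ncard := by
  by_cases h : ∀ g, g ∈ A → PybBig D g → g • x = x
  · left
    have : PybO D A ≤ stabilizer G x := by
      refine (Subgroup.closure_le _).2 ?_
      rintro g ⟨h1, h2⟩
      exact h g h1 h2
    exact fun g hg => this hg
  · right
    push Not at h
    obtain ⟨g, hgA, ⟨p, hp, hDp, k, hk⟩, hne⟩ := h
    rcases pyb_orbit_dichotomy' hp (pyb_zpowers_pgroup hp hk) x with h | h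
    · exact absurd (h g (mem_zpowers g)) hne
    · have hg : zpowers g ≤ PybO D A := by
        rw [Subgroup.zpowers_le]
        exact Subgroup.subset_closure ⟨hgA, p, hp, hDp, k, hk⟩
      have hsub : orbit (zpowers g) x ⊆ orbit (PybO D A) x := by
        rintro _ ⟨⟨h, hh⟩, rfl⟩
        exact ⟨⟨h, hg hh⟩, rfl⟩
      have := Set.ncard_le_ncard hsub
      omega

theorem PybDF.subgroup {D : ℕ} {G Ω : Type} [Group G] [MulAction G Ω] (h : PybDF D G Ω)
    (H : Subgroup G) : PybDF D H Ω := by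
  intro g p hp hD ho
  exact h g p hp hD (by rw [← ho, Subgroup.orderOf_coe])

theorem PybDF.ker_smooth {D : ℕ} {G Ω : Type} [Group G] [Finite G] [MulAction G Ω]
    (h : PybDF D G Ω) : PybSmooth D (Nat.card (toPermHom G Ω).ker) := by
  intro p hp hD hd
  have : Fact p.Prime := ⟨hp⟩
  obtain ⟨g, hg⟩ := exists_prime_orderOf_dvd_card' p hd
  obtain ⟨x, hx⟩ := h g p hp hD (by rw [← hg, Subgroup.orderOf_coe])
  apply hx
  have := g.2
  rw [MonoidHom.mem_ker] at this
  exact Equiv.congr_fun this x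

/-- Either no big prime divides the order, or some point is moved by `PybO`. -/
theorem pyb_exists_moved {D : ℕ} {G Ω : Type} [Group G] [Finite G] [MulAction G Ω]
    (h : PybDF D G Ω) (A : Subgroup G) :
    PybSmooth D (Nat.card A) ∨ ∃ x : Ω, ¬ ∀ g ∈ PybO D A, g • x = x := by
  by_cases hs : PybSmooth D (Nat.card A)
  · exact Or.inl hs
  · right
    unfold PybSmooth at hs
    push Not at hs
    obtain ⟨p, hp, hD, hd⟩ := hs
    have : Fact p.Prime := ⟨hp⟩
    obtain ⟨g, hg⟩ := exists_prime_orderOf_dvd_card' p hd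
    have hg' : orderOf (g : G) = p := by rw [← hg, Subgroup.orderOf_coe]
    obtain ⟨x, hx⟩ := h g p hp hD hg'
    refine ⟨x, fun hall => hx (hall g ?_)⟩
    apply Subgroup.subset_closure
    refine ⟨g.2, p, hp, hD, 1, ?_⟩
    rw [pow_one]
    conv_lhs => rw [← hg']
    exact pow_orderOf_eq_one _

/-- Splitting along an orbit. -/
theorem pyb_split {D : ℕ} {G Ω : Type} [Group G] [Finite G] [MulAction G Ω] [Finite Ω]
    (h : PybDF D G Ω) (x : Ω) (r s : ℕ)
    (h1 : ∀ (G' Ω' : Type) [Group G'] [Finite G'] [MulAction G' Ω'] [Finite Ω'],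
      PybDF D G' Ω' → Nat.card Ω' = (orbit G x).ncard → PybGood D G' r)
    (h2 : ∀ (G' Ω' : Type) [Group G'] [Finite G'] [MulAction G' Ω'] [Finite Ω'],
      PybDF D G' Ω' → Nat.card Ω' = ((orbit G x)ᶜ).ncard → PybGood D G' s) :
    PybGood D G (r + s) := by
  classical
  apply PybGood.of_hom (toPermHom G (orbit G x))
  · refine h1 _ (orbit G x) ?_ (Nat.card_coe_set_eq _)
    intro g p hp hD ho
    by_contra hcon
    push Not at hcon
    have : g = 1 := by
      ext y
      have := hcon y
      exact congrArg Subtype.val this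
    rw [this, orderOf_one] at ho
    exact hp.one_lt.ne ho
  · let C : SubMulAction G Ω :=
      { carrier := (orbit G x)ᶜ
        smul_mem' := by
          intro c y hy hy'
          apply hy
          have h3 := (MulAction.mem_orbit_of_mem_orbit c⁻¹ hy')
          rwa [inv_smul_smul] at h3 }
    refine h2 (toPermHom G (orbit G x)).ker C ?_ (Nat.card_coe_set_eq _)
    intro g p hp hD ho
    obtain ⟨y, hy⟩ := h g p hp hD (by rw [← ho, Subgroup.orderOf_coe])
    have hyC : y ∈ (orbit G x)ᶜ := by
      intro hy'
      apply hy
      have := g.2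
      rw [MonoidHom.mem_ker] at this
      exact congrArg Subtype.val (Equiv.congr_fun this ⟨y, hy'⟩)
    refine ⟨⟨y, hyC⟩, fun heq => hy ?_⟩
    exact congrArg Subtype.val heq

/-- The coset action on the normalizer. -/
theorem pyb_quot {D : ℕ} {G Ω : Type} [Group G] [Finite G] [MulAction G Ω] [Finite Ω]
    (h : PybDF D G Ω) (α z : Ω) (hz : z ∈ orbit G α) (hzα : z ≠ α)
    (hfix : ∀ y : Ω, y ∉ orbit G α → ∀ g : G, g • y = y)
    (hOz : ∀ g ∈ PybO D (stabilizer G α), g • z = z)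
    (hF : ({y | ∀ g ∈ PybO D (stabilizer G α), g • y = y} : Set Ω).ncard < D) :
    ∃ N : Subgroup G, 2 * N.index ≤ Nat.card Ω ∧ PybDF D G (G ⧸ N) := by
  classical
  set O := PybO D (stabilizer G α) with hO
  have hconj : ∀ a : G, (∀ g ∈ O, a⁻¹ * g * a ∈ stabilizer G α) → ∀ g ∈ O, a⁻¹ * g * a ∈ O := by
    intro a ha
    have hle : O ≤ O.comap (MulAut.conj a⁻¹).toMonoidHom := by
      rw [hO, PybO, Subgroup.closure_le]
      intro g hg
      change (MulAut.conj a⁻¹) g ∈ PybO D (stabilizer G α)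
      apply Subgroup.subset_closure
      have hgO : g ∈ O := Subgroup.subset_closure hg
      obtain ⟨hgA, p, hp, hDp, k, hk⟩ := hg
      refine ⟨by simpa using ha g hgO, p, hp, hDp, k, ?_⟩
      rw [← map_pow, hk, map_one]
    intro g hg
    simpa using hle hg
  have hfinconj : ∀ a : G, (∀ g ∈ O, a⁻¹ * g * a ∈ O) → a ∈ normalizer (O : Set G) := by
    intro a ha
    rw [Subgroup.mem_normalizer_iff'']
    intro g
    refine ⟨ha g, fun hg => ?_⟩
    have hmap : O.map (MulAut.conj a⁻¹).toMonoidHom ≤ O := by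
      rintro _ ⟨g, hg, rfl⟩
      simpa using ha g hg
    have hcard : Nat.card O ≤ Nat.card (O.map (MulAut.conj a⁻¹).toMonoidHom) := by
      rw [Subgroup.card_map_of_injective (MulAut.conj a⁻¹).injective]
    have heq := Subgroup.eq_of_le_of_card_ge hmap hcard
    rw [← heq] at hg
    obtain ⟨g', hg', hgg⟩ := hg
    have : g' = g := by
      apply (MulAut.conj a⁻¹).injective
      simpa using hgg
    exact this ▸ hg'
  set N := normalizer (O : Set G) with hN
  have hSN : stabilizer G α ≤ N := by
    intro a ha
    apply hfinconj
    apply hconj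
    intro g hg
    have hg' := pybO_le D _ hg
    exact mul_mem (mul_mem (inv_mem ha) hg') ha
  obtain ⟨b, rfl⟩ := hz
  have hzα : b • α ≠ α := hzα
  have hOz : ∀ g ∈ O, g • b • α = b • α := hOz
  have hbN : b ∈ N := by
    apply hfinconj
    apply hconj
    intro g hg
    rw [mem_stabilizer_iff, mul_smul, mul_smul, hOz g hg, inv_smul_smul]
  refine ⟨N, ?_, ?_⟩
  · have h1 : (stabilizer G α).relIndex N * N.index ≤ Nat.card Ω := by
      rw [Subgroup.relIndex_mul_index hSN, index_stabilizer, ← Set.ncard_univ]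
      exact Set.ncard_le_ncard (Set.subset_univ _)
    refine le_trans (Nat.mul_le_mul_right _ ?_) h1
    have h0 : (stabilizer G α).relIndex N ≠ 0 := ((stabilizer G α).subgroupOf N).index_ne_zero_of_finite
    have hne1 : (stabilizer G α).relIndex N ≠ 1 := by
      intro h1
      rw [Subgroup.relIndex_eq_one] at h1
      exact hzα (h1 hbN)
    omega
  · intro g p hp hD ho
    by_contra hcon
    push Not at hcon
    have hgp : g ^ p ^ 1 = 1 := by rw [pow_one, ← ho]; exact pow_orderOf_eq_one g
    obtain ⟨y, hy⟩ := h g p hp hD ho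
    apply hy
    by_cases hyo : y ∈ orbit G α
    · obtain ⟨a, rfl⟩ := hyo
      change g • a • α = a • α
      have hmem : a⁻¹ * g * a ∈ N := by
        have := hcon (QuotientGroup.mk a)
        rw [MulAction.Quotient.smul_mk, smul_eq_mul, eq_comm, QuotientGroup.eq] at this
        simpa [mul_assoc] using this
      have hap : (a⁻¹ * g * a) ^ p ^ 1 = 1 := by
        have : a⁻¹ * g * a = MulAut.conj a⁻¹ g := by simp
        rw [this, ← map_pow, hgp, map_one]
      have hfx : (a⁻¹ * g * a) • α = α := by
        refine pyb_fix_of_small hp hap {y | ∀ g ∈ O, g • y = y} ?_ (hF.trans hD) ?_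
        · intro y hy g' hg'
          rw [hN, Subgroup.mem_normalizer_iff''] at hmem
          have h3 := hy _ ((hmem g').1 hg')
          have h4 : (a⁻¹ * g * a) • ((a⁻¹ * g * a)⁻¹ * g' * (a⁻¹ * g * a)) • y = (a⁻¹ * g * a) • y := by
            rw [h3]
          rw [← mul_smul] at h4
          rw [← mul_smul, ← h4]
          congr 1
          group
        · intro g' hg'
          exact pybO_le D _ hg'
      rw [mul_smul, mul_smul, inv_smul_eq_iff] at hfx
      exact hfx
    · exact hfix y hyo g

end

section

open Subgroup MulAction

/-- Multiple transitivity, phrased through pointwise stabilizers. -/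
def PybMT (G Ω : Type) [Group G] [MulAction G Ω] (t : ℕ) : Prop :=
  ∀ S : Finset Ω, S.card < t → ∀ x y : Ω, x ∉ S → y ∉ S →
    ∃ g : G, (∀ z ∈ S, g • z = z) ∧ g • x = y

theorem pyb_fixing_index {G Ω : Type} [Group G] [Finite G] [MulAction G Ω] [Finite Ω]
    (S : Finset Ω) : (fixingSubgroup G (S : Set Ω)).index ≤ Nat.card Ω ^ S.card := by
  classical
  have : Nat.card (S → Ω) = Nat.card Ω ^ S.card := by
    rw [Nat.card_fun]; simp
  rw [← this, Subgroup.index]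
  let f : G ⧸ fixingSubgroup G (S : Set Ω) → (S → Ω) :=
    Quotient.lift (fun g : G => fun s : S => g • (s : Ω)) (by
      intro a b hab
      have hab' := QuotientGroup.leftRel_apply.1 hab
      funext s
      have := (mem_fixingSubgroup_iff G).1 hab' s s.2
      rw [mul_smul, inv_smul_eq_iff] at this
      exact this.symm)
  refine Nat.card_le_card_of_injective f ?_
  intro a b
  induction a using QuotientGroup.induction_on
  induction b using QuotientGroup.induction_on
  rename_i a b
  intro hab
  rw [QuotientGroup.eq]
  rw [mem_fixingSubgroup_iff]
  intro y hy
  have h2 : a • y = b • y := congrFun hab ⟨y, hy⟩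
  rw [mul_smul, ← h2, inv_smul_smul]

/-- The bound for the number of generators. -/
def pybR (D T m : ℕ) : ℕ := (2 * m - D) * (2 * T) / D

theorem pybR_le {D T m : ℕ} : pybR D T m * D ≤ (2 * m - D) * (2 * T) := Nat.div_mul_le_self _ _

theorem le_pybR {D T m r : ℕ} (hD : 0 < D) (h : r * D ≤ (2 * m - D) * (2 * T)) : r ≤ pybR D T m :=
  (Nat.le_div_iff_mul_le hD).2 h

theorem pyb_main (D T n : ℕ) (hD : 0 < D) (hT : 2 ≤ T) (hn : n ≤ D ^ 2)
    (halt : ∀ (Ω : Type) [Finite Ω] (G : Subgroup (Equiv.Perm Ω)), D < Nat.card Ω →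
      Nat.card Ω ≤ n → PybMT G Ω T → PybGood D G 4) :
    ∀ m : ℕ, m ≤ n → ∀ (G Ω : Type) [Group G] [Finite G] [MulAction G Ω] [Finite Ω],
      PybDF D G Ω → Nat.card Ω = m → PybGood D G (pybR D T m) := by
  classical
  intro m
  induction m using Nat.strong_induction_on with
  | _ m ih =>
  intro hmn G Ω _ _ _ _ hDF hcard
  rcases pyb_exists_moved hDF ⊤ with hs | ⟨x, hx⟩
  · rw [Subgroup.card_top] at hs
    exact PybGood.of_smooth_card hs _
  have ha := (pybO_orbit D ⊤ x).resolve_left hx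
  have hcompl : ∀ B : Set Ω, Bᶜ.ncard = m - B.ncard := by
    intro B
    rw [Set.ncard_compl, hcard]
  have hleB : ∀ B : Set Ω, B.ncard ≤ m := by
    intro B
    rw [← hcard]
    exact Set.ncard_le_card B
  have hle := hleB (orbit (PybO D (⊤ : Subgroup G)) x)
  rcases hle.lt_or_eq with hlt | heq
  · have hg : PybGood D (PybO D (⊤ : Subgroup G))
        (pybR D T (orbit (PybO D (⊤ : Subgroup G)) x).ncard +
          pybR D T (orbit (PybO D (⊤ : Subgroup G)) x)ᶜ.ncard) := by
      refine pyb_split (hDF.subgroup _) x _ _ ?_ ?_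
      · intro G' Ω' _ _ _ _ h1 h2
        exact ih _ hlt (hlt.le.trans hmn) G' Ω' h1 h2
      · intro G' Ω' _ _ _ _ h1 h2
        have := hcompl (orbit (PybO D (⊤ : Subgroup G)) x)
        exact ih _ (by omega) (by omega) G' Ω' h1 h2
    rw [hcompl] at hg
    have hsm := pybO_smooth D (⊤ : Subgroup G)
    rw [Subgroup.relIndex_top_right] at hsm
    refine (PybGood.of_subgroup hD _ hg (mul_one _).symm hsm (k := 0) (by simp)).mono ?_
    apply le_pybR hD
    rw [add_zero, add_mul]
    refine (add_le_add pybR_le pybR_le).trans ?_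
    rw [← add_mul]
    apply Nat.mul_le_mul_right
    omega
  have horb : orbit (PybO D (⊤ : Subgroup G)) x = Set.univ := by
    exact Set.eq_of_subset_of_ncard_le (Set.subset_univ _) (by rw [Set.ncard_univ, hcard, heq])
  have htrans : ∀ y z : Ω, ∃ g : G, g • y = z := by
    intro y z
    have hy : y ∈ orbit (PybO D (⊤ : Subgroup G)) x := by rw [horb]; trivial
    have hz : z ∈ orbit (PybO D (⊤ : Subgroup G)) x := by rw [horb]; trivial
    obtain ⟨g, rfl⟩ := hy
    obtain ⟨h, rfl⟩ := hz
    refine ⟨(h : G) * (g : G)⁻¹, ?_⟩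
    change ((h : G) * (g : G)⁻¹) • ((g : G) • x) = (h : G) • x
    rw [mul_smul, inv_smul_smul]
  have hmD : D < m := by omega
  by_cases hMT : PybMT G Ω T
  · have h1 : PybGood D (toPermHom G Ω).range 4 := by
      refine halt Ω _ (by omega) (by omega) ?_
      intro S hS x y hx hy
      obtain ⟨g, hg1, hg2⟩ := hMT S hS x y hx hy
      exact ⟨⟨toPermHom G Ω g, g, rfl⟩, hg1, hg2⟩
    have h2 : PybGood D (toPermHom G Ω).ker 0 := PybGood.of_smooth_card hDF.ker_smooth 0
    refine (PybGood.of_hom _ h1 h2).mono ?_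
    apply le_pybR hD
    calc (4 + 0) * D = D * 4 := by ring
      _ ≤ (2 * m - D) * (2 * T) := Nat.mul_le_mul (by omega) (by omega)
  have hex : ∃ s : ℕ, s < T ∧ ∃ S : Finset Ω, S.card = s ∧ ∃ x y : Ω, x ∉ S ∧ y ∉ S ∧
      ∀ g : G, (∀ z ∈ S, g • z = z) → g • x ≠ y := by
    unfold PybMT at hMT
    push Not at hMT
    obtain ⟨S, h1, x, y, hx, hy, h2⟩ := hMT
    exact ⟨_, h1, S, rfl, x, y, hx, hy, h2⟩
  obtain ⟨hsT, S, hScard, u, v, hu, hv, huv⟩ := Nat.find_spec hex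
  have hmin := fun k => Nat.find_min hex (m := k)
  set s := Nat.find hex with hsdef
  have hSne : S.Nonempty := by
    rw [Finset.nonempty_iff_ne_empty]
    rintro rfl
    obtain ⟨g, hg⟩ := htrans u v
    exact huv g (by simp) hg
  obtain ⟨α, hα⟩ := hSne
  set S' := S.erase α with hS'
  have hS'card : S'.card = s - 1 := by rw [hS', Finset.card_erase_of_mem hα, hScard]
  have hspos : 0 < s := by rw [← hScard]; exact Finset.card_pos.2 ⟨α, hα⟩
  set Γ := fixingSubgroup G (S' : Set Ω) with hΓ
  have hαS' : α ∉ S' := by simp [hS']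
  have htransΓ : ∀ y, y ∉ S' → y ∈ orbit Γ α := by
    intro y hy
    have := hmin (s - 1) (by omega)
    push Not at this
    obtain ⟨g, hg1, hg2⟩ := this (by omega) S' hS'card α y hαS' hy
    exact ⟨⟨g, (mem_fixingSubgroup_iff G).2 hg1⟩, hg2⟩
  have hΓi : Γ.index ≤ D ^ (2 * (s - 1)) := by
    refine (pyb_fixing_index S').trans ?_
    rw [hcard, hS'card, pow_mul]
    exact Nat.pow_le_pow_left (hmn.trans hn) _
  have hDFΓ : PybDF D Γ Ω := hDF.subgroup Γ
  have hone : PybSmooth D 1 := fun p hp _ h => hp.one_lt.ne' (Nat.dvd_one.1 h)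
  have hΓG : ∀ r, PybGood D Γ r → PybGood D G (r + 2 * (s - 1)) := fun r hr =>
    PybGood.of_subgroup hD Γ hr (one_mul _).symm hone hΓi
  set A := stabilizer Γ α with hA
  have hAi : A.index ≤ D ^ 2 := by
    rw [hA, index_stabilizer]
    exact (hleB _).trans (hmn.trans hn)
  have hAG : ∀ r, PybGood D (PybO D A) r → PybGood D G (r + 2 * s) := by
    intro r hr
    have h1 : (PybO D A).index = (PybO D A).relIndex A * A.index :=
      (Subgroup.relIndex_mul_index (pybO_le D A)).symm
    have h2 := hΓG _ (PybGood.of_subgroup hD _ hr h1 (pybO_smooth D A) hAi)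
    exact h2.mono (by omega)
  rcases pyb_exists_moved hDFΓ A with hs | ⟨x₁, hx₁⟩
  · have hs' : PybSmooth D (Nat.card (PybO D A)) := hs.of_dvd (Subgroup.card_dvd_of_le (pybO_le D A))
    refine (hAG 0 (PybGood.of_smooth_card hs' 0)).mono ?_
    apply le_pybR hD
    calc (0 + 2 * s) * D = D * (2 * s) := by ring
      _ ≤ (2 * m - D) * (2 * T) := Nat.mul_le_mul (by omega) (by omega)
  have ha₁ := (pybO_orbit D A x₁).resolve_left hx₁
  set Λ := orbit (PybO D A) x₁ with hΛ
  have hΛm := hleB Λ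
  have hΛc := hcompl Λ
  by_cases hb : D ≤ Λᶜ.ncard
  · have hg : PybGood D (PybO D A) (pybR D T Λ.ncard + pybR D T Λᶜ.ncard) := by
      refine pyb_split (hDFΓ.subgroup _) x₁ _ _ ?_ ?_
      · intro G' Ω' _ _ _ _ h1 h2
        exact ih _ (by omega) (by omega) G' Ω' h1 h2
      · intro G' Ω' _ _ _ _ h1 h2
        exact ih _ (by omega) (by omega) G' Ω' h1 h2
    refine (hAG _ hg).mono ?_
    apply le_pybR hD
    calc (pybR D T Λ.ncard + pybR D T Λᶜ.ncard + 2 * s) * D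
        = pybR D T Λ.ncard * D + pybR D T Λᶜ.ncard * D + D * (2 * s) := by ring
      _ ≤ (2 * Λ.ncard - D) * (2 * T) + (2 * Λᶜ.ncard - D) * (2 * T) + D * (2 * T) := by
          refine add_le_add (add_le_add pybR_le pybR_le) (Nat.mul_le_mul_left _ (by omega))
      _ = ((2 * Λ.ncard - D) + (2 * Λᶜ.ncard - D) + D) * (2 * T) := by ring
      _ ≤ (2 * m - D) * (2 * T) := Nat.mul_le_mul_right _ (by omega)
  push Not at hb
  have hfixc : ∀ y, y ∉ Λ → ∀ g ∈ PybO D A, g • y = y := by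
    intro y hy
    refine (pybO_orbit D A y).resolve_right ?_
    intro hlt
    have hsub : orbit (PybO D A) y ⊆ Λᶜ := by
      intro w hw hwΛ
      apply hy
      have h1 : orbit (PybO D A) w = orbit (PybO D A) y := orbit_eq_iff.2 hw
      have h2 : orbit (PybO D A) w = Λ := orbit_eq_iff.2 hwΛ
      rw [← h2, h1]
      exact mem_orbit_self y
    have := Set.ncard_le_ncard hsub
    omega
  have hFsub : ({y | ∀ g ∈ PybO D A, g • y = y} : Set Ω) ⊆ Λᶜ := by
    intro y hy hyΛ
    have h2 : orbit (PybO D A) y = Λ := orbit_eq_iff.2 hyΛ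
    have h3 : Λ ⊆ {y} := by
      rw [← h2]
      rintro _ ⟨g, rfl⟩
      exact hy g g.2
    have := Set.ncard_le_ncard h3
    rw [Set.ncard_singleton] at this
    omega
  have hzex : ∃ z, z ∉ S ∧ z ∉ Λ := by
    by_contra hcon
    push Not at hcon
    obtain ⟨g, hg⟩ := hcon u hu
    obtain ⟨h, hh⟩ := hcon v hv
    have hmem : ∀ k : PybO D A, ∀ z ∈ S, ((k : Γ) : G) • z = z := by
      intro k z hz
      by_cases hzα : z = α
      · subst hzα
        exact pybO_le D A k.2
      · exact (mem_fixingSubgroup_iff G).1 (k : Γ).2 z (by simp [hS', hzα, hz])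
    refine huv (((h * g⁻¹ : PybO D A) : Γ) : G) (hmem _) ?_
    change (h * g⁻¹) • u = v
    rw [← hg, ← hh]
    change (h * g⁻¹) • g • x₁ = h • x₁
    rw [mul_smul, inv_smul_smul]
  obtain ⟨z, hzS, hzΛ⟩ := hzex
  obtain ⟨N, hN1, hN2⟩ := pyb_quot hDFΓ α z
    (htransΓ z (fun h => hzS (Finset.mem_of_mem_erase h)))
    (by rintro rfl; exact hzS hα)
    (by
      intro y hy g
      have hyS' : y ∈ S' := by
        by_contra h
        exact hy (htransΓ y h)
      exact (mem_fixingSubgroup_iff G).1 g.2 y hyS')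
    (hfixc z hzΛ)
    ((Set.ncard_le_ncard hFsub).trans_lt hb)
  rw [hcard] at hN1
  have hN0 : N.index ≠ 0 := N.index_ne_zero_of_finite
  have hg : PybGood D Γ (pybR D T N.index) := ih N.index (by omega) (by omega) Γ (Γ ⧸ N) hN2 rfl
  refine (hΓG _ hg).mono ?_
  apply le_pybR hD
  calc (pybR D T N.index + 2 * (s - 1)) * D
      = pybR D T N.index * D + D * (2 * (s - 1)) := by ring
    _ ≤ (2 * N.index - D) * (2 * T) + D * (2 * T) :=
        add_le_add pybR_le (Nat.mul_le_mul_left _ (by omega))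
    _ = ((2 * N.index - D) + D) * (2 * T) := by ring
    _ ≤ (2 * m - D) * (2 * T) := Nat.mul_le_mul_right _ (by omega)

end

section

open Subgroup MulAction

theorem pyb_fix_orbit {Ω : Type} [Finite Ω] {p l : ℕ} (hp : p.Prime) (hl : l.Prime)
    (hl1 : l + 2 ≤ p) (hl2 : p < 2 * l) {P : Subgroup (Equiv.Perm Ω)} (hP : IsPGroup p P)
    {g : Equiv.Perm Ω} {k : ℕ} (hg : g ^ l ^ k = 1) (hN : ∀ u ∈ P, g * u * g⁻¹ ∈ P) {x : Ω}
    (hO : (orbit P x).ncard = p) (hgO : ∀ y ∈ orbit P x, g • y ∈ orbit P x) :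
    ∀ y ∈ orbit P x, g • y = y := by
  classical
  intro a ha
  rcases pyb_orbit_dichotomy hl (pyb_zpowers_pgroup hl hg) a with h | ⟨n, hn0, hn⟩
  · exact h g (mem_zpowers g)
  have hfin : IsOfFinOrder g := isOfFinOrder_iff_pow_eq_one.2 ⟨_, pow_pos hl.pos k, hg⟩
  have hpow : ∀ i : ℕ, ∀ y ∈ orbit P x, g ^ i • y ∈ orbit P x := by
    intro i
    induction i with
    | zero => intro y hy; simpa using hy
    | succ i ih => intro y hy; rw [pow_succ, mul_smul]; exact ih _ (hgO y hy)
  have hsub : orbit (zpowers g) a ⊆ orbit P x := by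
    rintro _ ⟨⟨h, hh⟩, rfl⟩
    obtain ⟨i, rfl⟩ := (hfin.mem_powers_iff_mem_zpowers).2 hh
    exact hpow i a ha
  have hle := Set.ncard_le_ncard hsub
  have hl3 := hl.two_le
  have hcA : (orbit (zpowers g) a).ncard = l := by
    have : n = 1 := by
      by_contra hne
      have h2 : l ^ 2 ≤ l ^ n := Nat.pow_le_pow_right hl.pos (by omega)
      have : 2 * l ≤ l ^ 2 := by nlinarith
      omega
    rw [hn, this, pow_one]
  have hB : (orbit P x \ orbit (zpowers g) a).ncard = p - l := by
    rw [Set.ncard_sdiff hsub, hO, hcA]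
  have hBinv : ∀ y ∈ orbit P x \ orbit (zpowers g) a, g • y ∈ orbit P x \ orbit (zpowers g) a := by
    rintro y ⟨hy1, hy2⟩
    refine ⟨hgO y hy1, fun hy3 => hy2 ?_⟩
    have := mem_orbit_of_mem_orbit (⟨g, mem_zpowers g⟩⁻¹ : zpowers g) hy3
    have h4 : ((⟨g, mem_zpowers g⟩ : zpowers g)⁻¹ • (g • y)) = y := by
      change g⁻¹ • (g • y) = y
      rw [inv_smul_smul]
    rwa [h4] at this
  have hBfix : ∀ y ∈ orbit P x \ orbit (zpowers g) a, g • y = y := fun y hy =>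
    pyb_fix_of_small hl hg _ hBinv (by omega) hy
  obtain ⟨y, hy, z, hz, hyz⟩ := (Set.one_lt_ncard (Set.toFinite _)).1
    (show 1 < (orbit P x \ orbit (zpowers g) a).ncard by omega)
  have hzy : z ∈ orbit P y := by
    rw [orbit_eq_iff.2 hy.1]; exact hz.1
  obtain ⟨⟨u, hu⟩, huy⟩ := hzy
  change u • y = z at huy
  set c := g * u * g⁻¹ * u⁻¹ with hc
  have hcP : c ∈ P := P.mul_mem (hN u hu) (P.inv_mem hu)
  have hgy := hBfix y hy
  have hgz := hBfix z hz
  have hcz : c • z = z := by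
    rw [hc, mul_smul, ← huy, inv_smul_smul, mul_smul, mul_smul, inv_smul_eq_iff.2 hgy.symm, huy, hgz]
  have hcO : ∀ w ∈ orbit P x, c • w ∈ orbit P x := fun w hw =>
    mem_orbit_of_mem_orbit (⟨c, hcP⟩ : P) hw
  obtain ⟨j, hj⟩ := hP ⟨c, hcP⟩
  have hj' : c ^ p ^ j = 1 := congrArg Subtype.val hj
  have hcfix : ∀ w ∈ orbit P x, c • w = w := by
    intro w hw
    by_cases hwz : w = z
    · rw [hwz, hcz]
    refine pyb_fix_of_small hp hj' (orbit P x \ {z}) ?_ ?_ ⟨hw, hwz⟩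
    · rintro v ⟨hv1, hv2⟩
      refine ⟨hcO v hv1, fun hv3 => hv2 ?_⟩
      have hv4 : c • v = z := hv3
      have : c • v = c • z := by rw [hv4, hcz]
      exact smul_left_cancel c this
    · rw [Set.ncard_sdiff_singleton_of_mem hz.1, hO]
      have := hp.pos
      omega
  have huO : ∀ w ∈ orbit P x, u • w ∈ orbit P x := fun w hw =>
    mem_orbit_of_mem_orbit (⟨u, hu⟩ : P) hw
  have hcomm : ∀ w ∈ orbit P x, g • u • w = u • g • w := by
    intro w hw
    have := hcfix (u • g • w) (huO _ (hgO w hw))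
    rw [hc, mul_smul, inv_smul_smul, mul_smul, mul_smul, inv_smul_smul] at this
    exact this
  obtain ⟨j2, hj2⟩ := hP ⟨u, hu⟩
  have hj2' : u ^ p ^ j2 = 1 := congrArg Subtype.val hj2
  have hfin2 : IsOfFinOrder u := isOfFinOrder_iff_pow_eq_one.2 ⟨_, pow_pos hp.pos j2, hj2'⟩
  have hupow : ∀ i : ℕ, u ^ i • y ∈ orbit P x ∧ g • u ^ i • y = u ^ i • y := by
    intro i
    induction i with
    | zero => simpa using ⟨hy.1, hgy⟩
    | succ i ih =>
      rw [pow_succ', mul_smul]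
      exact ⟨huO _ ih.1, by rw [hcomm _ ih.1, ih.2]⟩
  have hsub2 : orbit (zpowers u) y ⊆ orbit P x := by
    rintro _ ⟨⟨h, hh⟩, rfl⟩
    obtain ⟨i, rfl⟩ := (hfin2.mem_powers_iff_mem_zpowers).2 hh
    exact (hupow i).1
  rcases pyb_orbit_dichotomy' hp (pyb_zpowers_pgroup hp hj2') y with h | h
  · exact absurd ((h u (mem_zpowers u)).symm.trans huy) hyz
  have heq := Set.eq_of_subset_of_ncard_le hsub2 (by rw [hO]; exact h)
  rw [← heq] at ha
  obtain ⟨⟨h, hh⟩, rfl⟩ := ha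
  obtain ⟨i, rfl⟩ := (hfin2.mem_powers_iff_mem_zpowers).2 hh
  exact (hupow i).2

open scoped Pointwise in
theorem pyb_orbit_stable {Ω : Type} [Finite Ω] {p l : ℕ} (hl : l.Prime)
    {P : Subgroup (Equiv.Perm Ω)}
    {g : Equiv.Perm Ω} {k : ℕ} (hg : g ^ l ^ k = 1) (hN : ∀ u ∈ P, g * u * g⁻¹ ∈ P)
    (C : Set Ω) (hC : ∀ x ∈ C, g • x ∈ C) (hPC : ∀ x ∈ C, orbit P x ⊆ C)
    (hO : ∀ x ∈ C, (orbit P x).ncard = p) (hcard : C.ncard < l * p) :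
    ∀ x ∈ C, ∀ y ∈ orbit P x, g • y ∈ orbit P x := by
  classical
  have hstep : ∀ x ∈ C, g • orbit P x = orbit P (g • x) := by
    intro x hx
    refine Set.eq_of_subset_of_ncard_le ?_ ?_
    · rintro _ ⟨_, ⟨⟨u, hu⟩, rfl⟩, rfl⟩
      refine ⟨⟨g * u * g⁻¹, hN u hu⟩, ?_⟩
      change (g * u * g⁻¹) • g • x = g • u • x
      rw [mul_smul, mul_smul, inv_smul_smul]
    · rw [hO _ (hC x hx), Set.ncard_smul_set, hO x hx]
  intro x hx
  have hfin : IsOfFinOrder g := isOfFinOrder_iff_pow_eq_one.2 ⟨_, pow_pos hl.pos k, hg⟩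
  rcases pyb_orbit_dichotomy' (Ω := Set Ω) hl (pyb_zpowers_pgroup hl hg) (orbit P x) with h | h
  · intro y hy
    rw [← h g (mem_zpowers g)]
    exact Set.smul_mem_smul_set hy
  exfalso
  have hF : ∀ A ∈ orbit (zpowers g) (orbit P x), ∃ y ∈ C, A = orbit P y := by
    rintro _ ⟨⟨h, hh⟩, rfl⟩
    obtain ⟨i, rfl⟩ := (hfin.mem_powers_iff_mem_zpowers).2 hh
    change ∃ y ∈ C, g ^ i • orbit P x = orbit P y
    induction i with
    | zero => exact ⟨x, hx, by simp⟩
    | succ i ih =>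
      obtain ⟨y, hy, hy2⟩ := ih (pow_mem (mem_zpowers g) i)
      exact ⟨g • y, hC y hy, by rw [pow_succ', mul_smul, hy2, hstep y hy]⟩
  set F := (Set.toFinite (orbit (zpowers g) (orbit P x))).toFinset with hFdef
  have hFc : F.card = (orbit (zpowers g) (orbit P x)).ncard := by
    rw [Set.ncard_eq_toFinset_card]
  have hmem : ∀ A ∈ F, ∃ y ∈ C, A = orbit P y := by
    intro A hA
    exact hF A (by simpa [hFdef] using hA)
  have h1 : (F.biUnion fun A => (Set.toFinite A).toFinset).card = ∑ A ∈ F, p := by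
    rw [Finset.card_biUnion]
    · refine Finset.sum_congr rfl ?_
      intro A hA
      obtain ⟨y, hy, rfl⟩ := hmem A hA
      rw [← Set.ncard_eq_toFinset_card, hO y hy]
    · intro A hA B hB hAB
      obtain ⟨y, hy, rfl⟩ := hmem A hA
      obtain ⟨z, hz, rfl⟩ := hmem B hB
      rw [Function.onFun, Finset.disjoint_left]
      intro w hw1 hw2
      simp only [Set.Finite.mem_toFinset] at hw1 hw2
      exact hAB ((orbit_eq_iff.2 hw1).symm.trans (orbit_eq_iff.2 hw2))
  have h2 : (F.biUnion fun A => (Set.toFinite A).toFinset) ⊆ (Set.toFinite C).toFinset := by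
    intro w hw
    rw [Finset.mem_biUnion] at hw
    obtain ⟨A, hA, hw⟩ := hw
    obtain ⟨y, hy, rfl⟩ := hmem A hA
    simp only [Set.Finite.mem_toFinset] at hw ⊢
    exact hPC y hy hw
  have h3 := Finset.card_le_card h2
  rw [h1, ← Set.ncard_eq_toFinset_card, Finset.sum_const, smul_eq_mul, hFc] at h3
  have := Nat.mul_le_mul_right p h
  omega

end

section

open Subgroup MulAction

theorem pyb_apply_inv {Ω : Type} (σ : Equiv.Perm Ω) (y : Ω) : σ (σ⁻¹ y) = y :=
  σ.apply_symm_apply y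

theorem pyb_rich {Ω : Type} {G : Subgroup (Equiv.Perm Ω)} {t : ℕ}
    (h : PybMT G Ω t) (σ : Equiv.Perm Ω) (S : Finset Ω) (hS : S.card ≤ t) :
    ∃ g ∈ G, ∀ x ∈ S, g x = σ x := by
  classical
  induction S using Finset.induction_on with
  | empty => exact ⟨1, G.one_mem, by simp⟩
  | insert a S ha ih =>
    rw [Finset.card_insert_of_notMem ha] at hS
    obtain ⟨g, hg, hgS⟩ := ih (by omega)
    obtain ⟨k, hk1, hk2⟩ := h (S.image σ) (by rw [Finset.card_image_of_injective _ σ.injective]; omega)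
      (g a) (σ a) (by
        intro hmem
        obtain ⟨b, hb, hba⟩ := Finset.mem_image.1 hmem
        rw [← hgS b hb] at hba
        exact ha (g.injective hba ▸ hb)) (by
        intro hmem
        obtain ⟨b, hb, hba⟩ := Finset.mem_image.1 hmem
        exact ha (σ.injective hba ▸ hb))
    refine ⟨(k : Equiv.Perm Ω) * g, G.mul_mem k.2 hg, ?_⟩
    intro x hx
    rcases Finset.mem_insert.1 hx with rfl | hx
    · exact hk2
    · rw [Equiv.Perm.mul_apply, hgS x hx]
      exact hk1 _ (Finset.mem_image_of_mem σ hx)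

theorem pyb_cycle_mem {Ω : Type} [Finite Ω] {p l q : ℕ} (hp : p.Prime) (hl : l.Prime)
    (hl1 : l + 2 ≤ p) (hl2 : p < 2 * l) {G : Subgroup (Equiv.Perm Ω)} (hMT : PybMT G Ω (2 * p))
    (S : Finset Ω) (hS : S.card < 2 * p) (hC : (S : Set Ω)ᶜ.ncard = q * p) (hq : q < l)
    (σ : Equiv.Perm Ω) (hσ : ∀ x ∉ S, σ x = x) (hσl : σ ^ l = 1) : σ ∈ G := by
  classical
  have : Fact p.Prime := ⟨hp⟩
  set L := G ⊓ fixingSubgroup (Equiv.Perm Ω) (S : Set Ω) with hL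
  have hLfix : ∀ g ∈ L, ∀ x ∈ S, g x = x := fun g hg x hx =>
    (mem_fixingSubgroup_iff _).1 hg.2 x hx
  have hσS : ∀ x ∈ S, σ x ∈ S := by
    intro x hx
    by_contra hcon
    have := hσ _ hcon
    exact hcon (by rw [σ.injective this]; exact hx)
  obtain ⟨P0⟩ : Nonempty (Sylow p L) := inferInstance
  set P : Subgroup (Equiv.Perm Ω) := (P0 : Subgroup L).map L.subtype with hPdef
  have hP : IsPGroup p P := P0.2.map _
  have hPL : P ≤ L := by
    rintro _ ⟨z, -, rfl⟩
    exact z.2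
  have hmemP : ∀ (u : Equiv.Perm Ω) (hu : u ∈ L), u ∈ P ↔ (⟨u, hu⟩ : L) ∈ P0 := by
    intro u hu
    constructor
    · rintro ⟨z, hz, rfl⟩
      exact hz
    · intro hz
      exact ⟨_, hz, rfl⟩
  -- Frattini step
  obtain ⟨g, hgG, hgS⟩ := pyb_rich hMT σ S hS.le
  have hgL : ∀ u ∈ L, g * u * g⁻¹ ∈ L := by
    intro u hu
    refine ⟨G.mul_mem (G.mul_mem hgG hu.1) (G.inv_mem hgG), ?_⟩
    refine (mem_fixingSubgroup_iff _).2 ?_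
    intro y hy
    have hy2 : σ⁻¹ y ∈ S := by
      by_contra hcon
      have := hσ _ hcon
      rw [pyb_apply_inv] at this
      exact hcon (this ▸ hy)
    have hgy : g (σ⁻¹ y) = y := by rw [hgS _ hy2, pyb_apply_inv]
    have hgy2 : g⁻¹ y = σ⁻¹ y := by rw [Equiv.Perm.inv_eq_iff_eq]; exact hgy.symm
    change g (u (g⁻¹ y)) = y
    rw [hgy2, hLfix u hu _ hy2, hgy]
  have hQ' : IsPGroup p ((P.map (MulAut.conj g).toMonoidHom).subgroupOf L) :=
    (hP.map _).comap_subtype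
  obtain ⟨Q, hQ⟩ := hQ'.exists_le_sylow
  obtain ⟨a, haQ⟩ := MulAction.exists_smul_eq L Q P0
  obtain ⟨h, hhG, hhS, hhN⟩ : ∃ h ∈ G, (∀ x ∈ S, h x = σ x) ∧ ∀ u ∈ P, h * u * h⁻¹ ∈ P := by
    refine ⟨a * g, G.mul_mem a.2.1 hgG, ?_, ?_⟩
    · intro x hx
      rw [Equiv.Perm.mul_apply, hgS x hx, hLfix a a.2 _ (hσS x hx)]
    · intro u hu
      have h1 : (⟨g * u * g⁻¹, hgL u (hPL hu)⟩ : L) ∈ Q := by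
        apply hQ
        rw [Subgroup.mem_subgroupOf]
        exact ⟨u, hu, rfl⟩
      have h2 : a * (⟨g * u * g⁻¹, hgL u (hPL hu)⟩ : L) * a⁻¹ ∈ P0 := by
        rw [← haQ]
        have := Subgroup.smul_mem_pointwise_smul _ (MulAut.conj a) _ h1
        exact this
      refine ⟨_, h2, ?_⟩
      simp [mul_assoc]
  -- power
  obtain ⟨h, hhG, hhS, hhN, e, hhe⟩ : ∃ h ∈ G, (∀ x ∈ S, h x = σ x) ∧
      (∀ u ∈ P, h * u * h⁻¹ ∈ P) ∧ ∃ e, h ^ l ^ e = 1 := by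
    have ho : orderOf h ≠ 0 := (orderOf_pos h).ne'
    obtain ⟨e, b, hb, heb⟩ := Nat.exists_eq_pow_mul_and_not_dvd ho l hl.ne_one
    have hcop : Nat.Coprime l b := (hl.coprime_iff_not_dvd).2 hb
    obtain ⟨k, hk1, hk2⟩ := Nat.chineseRemainder hcop 1 0
    refine ⟨h ^ k, G.pow_mem hhG k, ?_, ?_, e, ?_⟩
    · have h1 : ∀ i : ℕ, ∀ x ∈ S, (h ^ i) x = (σ ^ i) x := by
        intro i
        induction i with
        | zero => simp
        | succ i ih =>
          intro x hx
          rw [pow_succ, pow_succ, Equiv.Perm.mul_apply, Equiv.Perm.mul_apply, hhS x hx,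
            ih _ (hσS x hx)]
      intro x hx
      rw [h1 k x hx]
      have : σ ^ k = σ := by
        have h2 : σ ^ k = σ ^ 1 := pow_eq_pow_iff_modEq.2 (hk1.of_dvd (orderOf_dvd_of_pow_eq_one hσl))
        rw [h2, pow_one]
      rw [this]
    · intro u hu
      have : ∀ i : ℕ, h ^ i * u * (h ^ i)⁻¹ ∈ P := by
        intro i
        induction i with
        | zero => simpa using hu
        | succ i ih =>
          have := hhN _ ih
          rw [pow_succ']
          convert this using 1
          group
      exact this k
    · rw [← pow_mul, ← orderOf_dvd_iff_pow_eq_one, heb, mul_comm k]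
      exact mul_dvd_mul_left _ ((Nat.modEq_zero_iff_dvd).1 hk2)
  have hPC : ∀ x ∈ (S : Set Ω)ᶜ, orbit P x ⊆ (S : Set Ω)ᶜ := by
    rintro x hx _ ⟨⟨u, hu⟩, rfl⟩ hcon
    change u x ∈ S at hcon
    have := hLfix u (hPL hu) _ hcon
    exact hx (u.injective this ▸ hcon)
  have hLorb : ∀ x ∈ (S : Set Ω)ᶜ, orbit L x = (S : Set Ω)ᶜ := by
    intro x hx
    ext y
    constructor
    · rintro ⟨⟨u, hu⟩, rfl⟩ hcon
      change u x ∈ S at hcon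
      have := hLfix u hu _ hcon
      exact hx (u.injective this ▸ hcon)
    · intro hy
      obtain ⟨k, hk1, hk2⟩ := hMT S hS x y hx hy
      exact ⟨⟨k, k.2, (mem_fixingSubgroup_iff _).2 hk1⟩, hk2⟩
  have hqp : q * p < p ^ 2 := by
    rw [sq]
    exact Nat.mul_lt_mul_of_pos_right (by omega) hp.pos
  have hO : ∀ x ∈ (S : Set Ω)ᶜ, (orbit P x).ncard = p := by
    intro x hx
    rcases pyb_orbit_dichotomy hp hP x with hfix | ⟨n, hn0, hn⟩
    · exfalso
      have hle : (P0 : Subgroup L) ≤ stabilizer L x := by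
        intro u hu
        exact hfix u ⟨u, hu, rfl⟩
      have hi : (stabilizer L x).index = q * p := by
        rw [index_stabilizer, hLorb x hx, hC]
      exact P0.not_dvd_index (((Dvd.intro_left q rfl).trans (dvd_of_eq hi.symm)).trans
        (Subgroup.index_dvd_of_le hle))
    · have hle := Set.ncard_le_ncard (hPC x hx)
      have : n = 1 := by
        by_contra hne
        have h2 : p ^ 2 ≤ p ^ n := Nat.pow_le_pow_right hp.pos (by omega)
        omega
      rw [hn, this, pow_one]
  have hhC : ∀ x ∈ (S : Set Ω)ᶜ, h • x ∈ (S : Set Ω)ᶜ := by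
    intro x hx hcon
    change h x ∈ S at hcon
    have hy2 : σ⁻¹ (h x) ∈ S := by
      by_contra hcon2
      have := hσ _ hcon2
      rw [pyb_apply_inv] at this
      exact hcon2 (this ▸ hcon)
    have h3 := hhS _ hy2
    rw [pyb_apply_inv] at h3
    exact hx (h.injective h3 ▸ hy2)
  have hst := pyb_orbit_stable hl hhe hhN _ hhC hPC hO
    (by rw [hC]; exact Nat.mul_lt_mul_of_pos_right hq hp.pos)
  have : h = σ := by
    ext x
    by_cases hx : x ∈ S
    · exact hhS x hx
    · rw [hσ x hx]
      exact pyb_fix_orbit hp hl hl1 hl2 hP hhe hhN (hO x hx) (hst x hx) x (mem_orbit_self x)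
  exact this ▸ hhG

end

section

open Subgroup MulAction

theorem pyb_three_cycle {Ω : Type} [Fintype Ω] [DecidableEq Ω] {p l q : ℕ} (hp : p.Prime)
    (hl : l.Prime) (hl1 : l + 2 ≤ p) (hl2 : p < 2 * l) (hl3 : 3 ≤ l)
    {G : Subgroup (Equiv.Perm Ω)} (hMT : PybMT G Ω (2 * p))
    (S : Finset Ω) (hS : S.card < 2 * p) (hlS : l ≤ S.card)
    (hC : (S : Set Ω)ᶜ.ncard = q * p) (hq : q < l) : ∃ τ ∈ G, τ.IsThreeCycle := by
  obtain ⟨S', hS', hcS'⟩ := Finset.exists_subset_card_eq hlS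
  have hlen : S'.toList.length = l := by rw [Finset.length_toList, hcS']
  have hnd := S'.nodup_toList
  set xs := S'.toList with hxs
  set σ := xs.formPerm with hσdef
  have hσl : σ ^ l = 1 := by rw [← hlen]; exact List.formPerm_pow_length_eq_one_of_nodup _ hnd
  have hσ : ∀ x ∉ S, σ x = x := by
    intro x hx
    apply List.formPerm_apply_of_notMem
    intro hx2
    exact hx (hS' (Finset.mem_toList.1 hx2))
  have key := fun s h1 h2 => pyb_cycle_mem hp hl hl1 hl2 hMT S hS hC hq s h1 h2
  set a := xs[0]'(by omega) with ha
  set b := xs[1]'(by omega) with hb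
  set c := xs[2]'(by omega) with hc
  have hab : a ≠ b := by rw [ha, hb, Ne, hnd.getElem_inj_iff]; omega
  have hac : a ≠ c := by rw [ha, hc, Ne, hnd.getElem_inj_iff]; omega
  have hbc : b ≠ c := by rw [hb, hc, Ne, hnd.getElem_inj_iff]; omega
  have hσa : σ a = b := List.formPerm_apply_lt_getElem xs hnd 0 (by omega)
  have hσb : σ b = c := List.formPerm_apply_lt_getElem xs hnd 1 (by omega)
  have haS : a ∈ S := hS' (Finset.mem_toList.1 (List.getElem_mem _))
  have hbS : b ∈ S := hS' (Finset.mem_toList.1 (List.getElem_mem _))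
  have h1 : σ ∈ G := key σ hσ hσl
  have h2 : Equiv.swap a b * σ * (Equiv.swap a b)⁻¹ ∈ G := by
    apply key
    · intro x hx
      have hxa : x ≠ a := fun h => hx (h ▸ haS)
      have hxb : x ≠ b := fun h => hx (h ▸ hbS)
      rw [Equiv.swap_inv, Equiv.Perm.mul_apply, Equiv.Perm.mul_apply,
        Equiv.swap_apply_of_ne_of_ne hxa hxb, hσ x hx, Equiv.swap_apply_of_ne_of_ne hxa hxb]
    · rw [conj_pow, hσl]; simp
  refine ⟨_, G.mul_mem h2 (G.inv_mem h1), ?_⟩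
  have h3 : Equiv.swap a b * σ * (Equiv.swap a b)⁻¹ * σ⁻¹ = Equiv.swap b a * Equiv.swap b c := by
    rw [Equiv.swap_comm b a, ← hσa, ← hσb, ← hσa, Equiv.swap_inv, mul_assoc, mul_assoc,
      Equiv.swap_apply_apply, mul_assoc]
  rw [h3]
  exact Equiv.Perm.isThreeCycle_swap_mul_swap_same hab.symm hbc hac

theorem pyb_alt_le {Ω : Type} [Fintype Ω] [DecidableEq Ω] {t : ℕ} (ht : 3 ≤ t)
    {G : Subgroup (Equiv.Perm Ω)} (hMT : PybMT G Ω t) {τ : Equiv.Perm Ω} (hτ : τ ∈ G)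
    (h3 : τ.IsThreeCycle) : alternatingGroup Ω ≤ G := by
  rw [← Equiv.Perm.closure_three_cycles_eq_alternating, closure_le]
  intro τ' hτ'
  have hconj : IsConj τ τ' := by
    rw [Equiv.Perm.isConj_iff_cycleType_eq]
    exact Eq.trans h3 (Eq.symm hτ')
  obtain ⟨π, rfl⟩ := isConj_iff.1 hconj
  obtain ⟨g, hg, hgS⟩ := pyb_rich hMT π τ.support (by rw [h3.card_support]; exact ht)
  have hdis : Equiv.Perm.Disjoint (π⁻¹ * g) τ := by
    intro x
    by_cases hx : x ∈ τ.support
    · left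
      rw [Equiv.Perm.mul_apply, hgS x hx]
      exact π.symm_apply_apply x
    · right
      exact Equiv.Perm.notMem_support.1 hx
  have hcm : (π⁻¹ * g) * τ = τ * (π⁻¹ * g) := hdis.commute
  have : π * τ * π⁻¹ = g * τ * g⁻¹ := by
    have h4 : g * τ = π * ((π⁻¹ * g) * τ) := by group
    rw [h4, hcm]
    group
  change π * τ * π⁻¹ ∈ G
  rw [this]
  exact G.mul_mem (G.mul_mem hg hτ) (G.inv_mem hg)

theorem pyb_good_of_alt {Ω : Type} [Fintype Ω] [DecidableEq Ω] (D : ℕ) (h2 : 2 ≤ Fintype.card Ω)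
    {G : Subgroup (Equiv.Perm Ω)} (h : alternatingGroup Ω ≤ G) : PybGood D G 4 := by
  have : Nontrivial Ω := Fintype.one_lt_card_iff_nontrivial.1 h2
  have hi : G.index ≤ 2 := by
    have := index_dvd_of_le h
    rw [alternatingGroup.index_eq_two] at this
    exact Nat.le_of_dvd (by norm_num) this
  set xs := (Finset.univ : Finset Ω).toList with hxs
  have hlen : xs.length = Fintype.card Ω := by rw [hxs, Finset.length_toList, Finset.card_univ]
  have hnd : xs.Nodup := Finset.nodup_toList _
  have hcyc := List.isCycle_formPerm hnd (by omega)
  have hsup : xs.formPerm.support = Finset.univ := by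
    rw [List.support_formPerm_of_nodup _ hnd]
    · rw [hxs, Finset.toList_toFinset]
    · intro x hx
      rw [hx] at hlen
      simp only [List.length_singleton] at hlen
      omega
  obtain ⟨x⟩ : Nonempty Ω := inferInstance
  have hcl := Equiv.Perm.closure_cycle_adjacent_swap hcyc hsup x
  obtain ⟨T, hT, hT2⟩ := Subgroup.exists_finset_card_le_mul G
    (S := {xs.formPerm, Equiv.swap x (xs.formPerm x)}) (by simpa using hcl)
  refine ⟨T, hT.trans ?_, ?_⟩
  · exact Nat.mul_le_mul hi Finset.card_le_two
  · rw [hT2, index_top]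
    intro p hp _ hd
    exact hp.one_lt.ne' (Nat.dvd_one.1 hd)

theorem pyb_halt {Ω : Type} [Finite Ω] (D : ℕ) {p : ℕ} (hp : p.Prime) (hp7 : 7 ≤ p)
    (h1 : 2 * p ≤ Nat.card Ω) (h2 : 2 * Nat.card Ω ≤ p * (p - 1))
    {G : Subgroup (Equiv.Perm Ω)} (hMT : PybMT G Ω (2 * p)) : PybGood D G 4 := by
  classical
  have : Fintype Ω := Fintype.ofFinite Ω
  set m := Nat.card Ω with hm
  have hmf : Fintype.card Ω = m := by rw [hm, Nat.card_eq_fintype_card]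
  have hodd : p % 2 = 1 := by
    rcases hp.eq_two_or_odd with h | h <;> omega
  obtain ⟨l, hl, hl1, hl2⟩ := Nat.exists_prime_lt_and_le_two_mul ((p - 1) / 2) (by omega)
  have hl3 : l % 2 = 1 := by
    rcases hl.eq_two_or_odd with h | h <;> omega
  have hdm := Nat.div_add_mod m p
  have hmod := Nat.mod_lt m hp.pos
  have hq1 : 2 ≤ m / p := (Nat.le_div_iff_mul_le hp.pos).2 h1
  have hq2 : 2 * (m / p) ≤ p - 1 := by
    have : 2 * (m / p) * p ≤ (p - 1) * p := by
      have e1 : 2 * (m / p) * p = 2 * (p * (m / p)) := by ring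
      rw [e1, mul_comm (p - 1)]
      omega
    exact Nat.le_of_mul_le_mul_right this hp.pos
  have hqp : (m / p - 1) * p + p = p * (m / p) := by
    obtain ⟨k, hk⟩ : ∃ k, m / p = k + 1 := ⟨m / p - 1, by omega⟩
    rw [hk]; simp; ring
  obtain ⟨S, -, hS⟩ := Finset.exists_subset_card_eq
    (s := (Finset.univ : Finset Ω)) (n := p + m % p) (by rw [Finset.card_univ, hmf]; omega)
  have hC : (S : Set Ω)ᶜ.ncard = (m / p - 1) * p := by
    rw [Set.ncard_compl, Set.ncard_coe_finset, hS]; omega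
  obtain ⟨τ, hτ, h3⟩ := pyb_three_cycle hp hl (by omega) (by omega) (by omega) hMT S (by omega)
    (by omega) hC (by omega)
  exact pyb_good_of_alt D (by omega) (pyb_alt_le (by omega) hMT hτ h3)

end

section

open Subgroup MulAction

theorem pyb_relIndex_mul_card {Γ : Type} [Group Γ] (H K : Subgroup Γ) (h : H ≤ K) :
    H.relIndex K * Nat.card H = Nat.card K := by
  rw [← Subgroup.relIndex_bot_left, ← Subgroup.relIndex_bot_left, mul_comm]
  exact Subgroup.relIndex_mul_relIndex _ _ _ bot_le h

theorem pyb_pcount {Γ : Type} [Group Γ] [Finite Γ] {p : ℕ} (hp : p.Prime) :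
    ∀ a : ℕ, ∀ Q : Subgroup Γ, Nat.card Q = p ^ a → ∀ k : ℕ,
      {H : Subgroup Γ | H ≤ Q ∧ Nat.card H = p ^ k}.ncard ≤ 2 ^ a * p ^ (k * (a - k)) := by
  classical
  have : Fact p.Prime := ⟨hp⟩
  intro a
  induction a with
  | zero =>
    intro Q hQ k
    rw [pow_zero, Subgroup.card_eq_one] at hQ
    subst hQ
    have : {H : Subgroup Γ | H ≤ ⊥ ∧ Nat.card H = p ^ k} ⊆ {⊥} := by
      rintro H ⟨h1, -⟩
      exact le_bot_iff.1 h1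
    refine (Set.ncard_le_ncard this).trans ?_
    simp
  | succ a ih =>
    intro Q hQ k
    by_cases hk0 : k = 0
    · subst hk0
      have : {H : Subgroup Γ | H ≤ Q ∧ Nat.card H = p ^ 0} ⊆ {⊥} := by
        rintro H ⟨-, h1⟩
        rw [pow_zero, Subgroup.card_eq_one] at h1
        exact h1
      refine (Set.ncard_le_ncard this).trans ?_
      simp [Nat.one_le_two_pow]
    by_cases hka : a + 1 < k
    · have : {H : Subgroup Γ | H ≤ Q ∧ Nat.card H = p ^ k} = ∅ := by
        ext H
        simp only [Set.mem_ofPred_eq, Set.mem_empty_iff_false, iff_false, not_and]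
        intro h1 h2
        have h3 := Subgroup.card_le_of_le h1
        rw [h2, hQ] at h3
        have := Nat.pow_lt_pow_right hp.one_lt hka
        omega
      rw [this]; simp
    obtain ⟨j, rfl⟩ : ∃ j, k = j + 1 := ⟨k - 1, by omega⟩
    obtain ⟨d, rfl⟩ : ∃ d, a = j + d := ⟨a - j, by omega⟩
    obtain ⟨M0, hM0⟩ := Sylow.exists_subgroup_card_pow_prime (G := Q) p (n := j + d)
      (by rw [hQ]; exact pow_dvd_pow _ (by omega))
    set M : Subgroup Γ := M0.map Q.subtype with hM
    have hMc : Nat.card M = p ^ (j + d) := by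
      rw [hM, Subgroup.card_map_of_injective Q.subtype_injective, hM0]
    have hMQ : M ≤ Q := by
      rintro _ ⟨z, -, rfl⟩
      exact z.2
    have hpp := hp.pos
    have hrel : M.relIndex Q = p := by
      have h1 := pyb_relIndex_mul_card M Q hMQ
      rw [hQ, hMc, pow_succ'] at h1
      exact Nat.eq_of_mul_eq_mul_right (pow_pos hpp _) h1
    -- the two families
    set A := {H : Subgroup Γ | H ≤ M ∧ Nat.card H = p ^ (j + 1)} with hA
    set B := {H : Subgroup Γ | (H ≤ Q ∧ Nat.card H = p ^ (j + 1)) ∧ ¬ H ≤ M} with hB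
    have hsub : {H : Subgroup Γ | H ≤ Q ∧ Nat.card H = p ^ (j + 1)} ⊆ A ∪ B := by
      intro H hH
      by_cases h : H ≤ M
      · exact Or.inl ⟨h, hH.2⟩
      · exact Or.inr ⟨hH, h⟩
    have hcap : ∀ H ∈ B, Nat.card (H ⊓ M : Subgroup Γ) = p ^ j := by
      rintro H ⟨⟨h1, h2⟩, h3⟩
      have e1 := pyb_relIndex_mul_card (H ⊓ M) H inf_le_left
      rw [Subgroup.inf_relIndex_left, h2] at e1
      have e2 : M.relIndex H ≤ p := by
        rw [← hrel]
        exact Subgroup.relIndex_le_of_le_right h1 (by rw [hrel]; exact hpp.ne')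
      have e3 : M.relIndex H ≠ 1 := by
        rw [Ne, Subgroup.relIndex_eq_one]; exact h3
      obtain ⟨i, hi, hi2⟩ := (Nat.dvd_prime_pow hp).1 (Dvd.intro _ e1)
      have : i = 1 := by
        rcases Nat.lt_or_ge i 1 with h | h
        · exfalso
          apply e3
          rw [hi2, show i = 0 by omega, pow_zero]
        · by_contra hne
          have : p ^ 2 ≤ p ^ i := Nat.pow_le_pow_right hpp (by omega)
          have h4 := hp.two_le
          rw [hi2] at e2
          nlinarith
      rw [hi2, this, pow_one, pow_succ'] at e1
      exact Nat.eq_of_mul_eq_mul_left hpp e1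
    have hAle : A.ncard ≤ 2 ^ (j + d) * p ^ ((j + 1) * d) := by
      refine (ih M hMc (j + 1)).trans ?_
      apply Nat.mul_le_mul_left
      apply Nat.pow_le_pow_right hpp
      apply Nat.mul_le_mul_left
      omega
    have hCle := ih M hMc j
    set C := {H : Subgroup Γ | H ≤ M ∧ Nat.card H = p ^ j} with hC
    have hBle : B.ncard ≤ p ^ d * C.ncard := by
      rw [Set.ncard_eq_toFinset_card B, Set.ncard_eq_toFinset_card C]
      apply Finset.card_le_mul_card_image_of_maps_to (f := fun H => H ⊓ M)
      · intro H hH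
        simp only [Set.Finite.mem_toFinset] at hH ⊢
        exact ⟨inf_le_right, hcap H hH⟩
      intro H0 hH0
      simp only [Set.Finite.mem_toFinset] at hH0
      set F := {H ∈ (Set.toFinite B).toFinset | H ⊓ M = H0} with hF
      have hFm : ∀ H ∈ F, H ∈ B ∧ H ⊓ M = H0 := by
        intro H hH
        simpa [hF] using hH
      have hpj : p ^ j < p ^ (j + 1) := Nat.pow_lt_pow_right hp.one_lt (by omega)
      have hdiff : ∀ H ∈ F, ((H : Set Γ) \ (M : Set Γ)).ncard = p ^ (j + 1) - p ^ j := by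
        intro H hH
        obtain ⟨h1, h2⟩ := hFm H hH
        have e1 : (H : Set Γ) \ (M : Set Γ) = (H : Set Γ) \ ((H ⊓ M : Subgroup Γ) : Set Γ) := by
          ext x
          simp
        rw [e1, Set.ncard_sdiff (by exact fun x hx => hx.1)]
        have e2 := hcap H h1
        have e3 := h1.1.2
        rw [← Nat.card_coe_set_eq, ← Nat.card_coe_set_eq]
        exact congrArg₂ (· - ·) e3 e2
      have hcard : (F.biUnion fun H => (Set.toFinite ((H : Set Γ) \ (M : Set Γ))).toFinset).card
          = ∑ H ∈ F, (p ^ (j + 1) - p ^ j) := by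
        rw [Finset.card_biUnion]
        · refine Finset.sum_congr rfl ?_
          intro H hH
          rw [← Set.ncard_eq_toFinset_card, hdiff H hH]
        · intro H hH H' hH' hne
          rw [Function.onFun, Finset.disjoint_left]
          intro h hh hh'
          simp only [Set.Finite.mem_toFinset] at hh hh'
          apply hne
          obtain ⟨h1, h2⟩ := hFm H hH
          obtain ⟨h1', h2'⟩ := hFm H' hH'
          have hle : H0 ≤ H ⊓ H' := le_inf (h2 ▸ inf_le_left) (h2' ▸ inf_le_left)
          have hd : Nat.card (H ⊓ H' : Subgroup Γ) ∣ p ^ (j + 1) :=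
            h1.1.2 ▸ Subgroup.card_dvd_of_le inf_le_left
          obtain ⟨i, hi, hi2⟩ := (Nat.dvd_prime_pow hp).1 hd
          have hij : i = j + 1 := by
            by_contra hcon
            have h5 : p ^ i ≤ p ^ j := Nat.pow_le_pow_right hpp (by omega)
            have h6 : H0 = H ⊓ H' := Subgroup.eq_of_le_of_card_ge hle (by rw [hi2, hH0.2]; exact h5)
            have h7 : h ∈ H0 := by rw [h6]; exact ⟨hh.1, hh'.1⟩
            exact hh.2 (hH0.1 h7)
          rw [hij] at hi2
          have e1 : H ⊓ H' = H :=
            Subgroup.eq_of_le_of_card_ge inf_le_left (by rw [hi2, h1.1.2])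
          have e2 : H ⊓ H' = H' :=
            Subgroup.eq_of_le_of_card_ge inf_le_right (by rw [hi2, h1'.1.2])
          exact e1.symm.trans e2
      have hsub2 : (F.biUnion fun H => (Set.toFinite ((H : Set Γ) \ (M : Set Γ))).toFinset) ⊆
          (Set.toFinite ((Q : Set Γ) \ (M : Set Γ))).toFinset := by
        intro h hh
        rw [Finset.mem_biUnion] at hh
        obtain ⟨H, hH, hh⟩ := hh
        simp only [Set.Finite.mem_toFinset] at hh ⊢
        exact ⟨(hFm H hH).1.1.1 hh.1, hh.2⟩
      have hQM : ((Q : Set Γ) \ (M : Set Γ)).ncard = p ^ (j + d + 1) - p ^ (j + d) := by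
        rw [Set.ncard_sdiff (by exact hMQ), ← Nat.card_coe_set_eq, ← Nat.card_coe_set_eq]
        exact congrArg₂ (· - ·) hQ hMc
      have hfin := Finset.card_le_card hsub2
      rw [hcard, ← Set.ncard_eq_toFinset_card, hQM, Finset.sum_const, smul_eq_mul] at hfin
      have e5 : p ^ (j + d + 1) - p ^ (j + d) = p ^ d * (p ^ (j + 1) - p ^ j) := by
        rw [Nat.mul_sub, ← pow_add, ← pow_add]
        congr 2 <;> omega
      rw [e5] at hfin
      exact Nat.le_of_mul_le_mul_right hfin (by omega)
    have e6 : j + d - j = d := by omega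
    have e7 : j + d + 1 - (j + 1) = d := by omega
    rw [e6] at hCle
    rw [e7]
    calc _ ≤ (A ∪ B).ncard := Set.ncard_le_ncard hsub
      _ ≤ A.ncard + B.ncard := Set.ncard_union_le _ _
      _ ≤ 2 ^ (j + d) * p ^ ((j + 1) * d) + p ^ d * (2 ^ (j + d) * p ^ (j * d)) :=
          add_le_add hAle (hBle.trans (Nat.mul_le_mul_left _ hCle))
      _ = 2 ^ (j + d + 1) * p ^ ((j + 1) * d) := by
          rw [add_mul j 1 d, pow_add p, one_mul, pow_succ]; ring

theorem pyb_pcount_total {Γ : Type} [Group Γ] [Finite Γ] {p : ℕ} (hp : p.Prime) {a : ℕ}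
    (ha : (Nat.card Γ).factorization p = a) :
    Nat.card {H : Subgroup Γ // IsPGroup p H} ≤
      Nat.card Γ * ((a + 1) * (2 ^ a * p ^ (a * a / 4))) := by
  classical
  have : Fact p.Prime := ⟨hp⟩
  have : Fintype (Sylow p Γ) := Fintype.ofFinite _
  change Nat.card {H : Subgroup Γ | IsPGroup p H} ≤ _
  rw [Nat.card_coe_set_eq]
  have hsub : {H : Subgroup Γ | IsPGroup p H} ⊆ ⋃ Q ∈ (Finset.univ : Finset (Sylow p Γ)),
      ⋃ k ∈ Finset.range (a + 1), {H : Subgroup Γ | H ≤ Q ∧ Nat.card H = p ^ k} := by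
    intro H hH
    obtain ⟨Q, hQ⟩ := IsPGroup.exists_le_sylow hH
    obtain ⟨k, hk⟩ := (IsPGroup.iff_card (p := p)).1 hH
    simp only [Set.mem_iUnion]
    refine ⟨Q, Finset.mem_univ _, k, ?_, hQ, hk⟩
    have h1 := Subgroup.card_le_of_le hQ
    rw [hk, Sylow.card_eq_multiplicity, ha] at h1
    have := (Nat.pow_le_pow_iff_right hp.one_lt).1 h1
    simp; omega
  refine (Set.ncard_le_ncard hsub).trans ((Finset.set_ncard_biUnion_le _ _).trans ?_)
  have hS : Fintype.card (Sylow p Γ) ≤ Nat.card Γ := by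
    rw [← Nat.card_eq_fintype_card]
    obtain ⟨Q⟩ : Nonempty (Sylow p Γ) := inferInstance
    exact Nat.le_of_dvd Nat.card_pos ((Sylow.card_dvd_index Q).trans (Subgroup.index_dvd_card _))
  calc _ ≤ ∑ Q : Sylow p Γ, (a + 1) * (2 ^ a * p ^ (a * a / 4)) := by
        apply Finset.sum_le_sum
        intro Q _
        refine (Finset.set_ncard_biUnion_le _ _).trans ?_
        calc _ ≤ ∑ k ∈ Finset.range (a + 1), 2 ^ a * p ^ (a * a / 4) := by
              apply Finset.sum_le_sum
              intro k hk
              refine (pyb_pcount hp a (Q : Subgroup Γ) (by rw [Sylow.card_eq_multiplicity, ha]) k).trans ?_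
              apply Nat.mul_le_mul_left
              apply Nat.pow_le_pow_right hp.pos
              rw [Nat.le_div_iff_mul_le (by norm_num)]
              obtain ⟨d, rfl⟩ : ∃ d, a = k + d := ⟨a - k, by simp at hk; omega⟩
              rw [Nat.add_sub_cancel_left]
              nlinarith [sq_nonneg ((k : ℤ) - d), four_mul_le_sq_add k d]
          _ = _ := by simp
    _ = Fintype.card (Sylow p Γ) * ((a + 1) * (2 ^ a * p ^ (a * a / 4))) := by simp
    _ ≤ _ := Nat.mul_le_mul_right _ hS

end

section

open Subgroup MulAction

theorem pyb_subgroup_bound {Γ : Type} [Group Γ] [Finite Γ] {D R : ℕ}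
    (h : ∀ G : Subgroup Γ, PybGood D G R) :
    Nat.card (Subgroup Γ) ≤
      (∏ p ∈ (Finset.range (D + 1)).filter Nat.Prime, Nat.card {H : Subgroup Γ // IsPGroup p H}) *
        Nat.card Γ ^ R := by
  classical
  set I := (Finset.range (D + 1)).filter Nat.Prime with hI
  let Φ : ((p : I) → {H : Subgroup Γ // IsPGroup p H}) × (Fin R → Γ) → Subgroup Γ :=
    fun x => (⨆ p, (x.1 p).1) ⊔ closure (Set.range x.2)
  have hΦ : Function.Surjective Φ := by
    intro G
    obtain ⟨X, hX, hXs⟩ := h G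
    have hSyl : ∀ p : ℕ, Nonempty (Sylow p G) := fun p => inferInstance
    let P0 : (p : ℕ) → Sylow p G := fun p => (hSyl p).some
    let P : (p : I) → {H : Subgroup Γ // IsPGroup p H} :=
      fun p => ⟨((P0 p : Sylow p G) : Subgroup G).map G.subtype, (P0 p).2.map _⟩
    let f : Fin R → G := fun i => X.toList.getD i 1
    let f' : Fin R → Γ := fun i => f i
    refine ⟨(P, f'), ?_⟩
    change (⨆ p, (P p).1) ⊔ closure (Set.range f') = G
    set K := (⨆ p, (P p).1) ⊔ closure (Set.range f') with hK
    have hKG : K ≤ G := by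
      refine sup_le (iSup_le ?_) ?_
      · rintro p _ ⟨z, -, rfl⟩
        exact z.2
      · rw [closure_le]
        rintro _ ⟨i, rfl⟩
        exact (f i).2
    refine le_antisymm hKG ?_
    rw [← Subgroup.relIndex_eq_one]
    by_contra hne
    obtain ⟨q, hq, hqd⟩ := Nat.exists_prime_and_dvd hne
    by_cases hqD : q ≤ D
    · have : Fact q.Prime := ⟨hq⟩
      have hqI : q ∈ I := by simp [hI, hq]; omega
      have hle : ((P0 q : Sylow q G) : Subgroup G) ≤ K.subgroupOf G := by
        intro z hz
        rw [Subgroup.mem_subgroupOf]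
        exact (le_sup_of_le_left (le_iSup (fun p => (P p).1) ⟨q, hqI⟩) :
          (P ⟨q, hqI⟩).1 ≤ K) ⟨z, hz, rfl⟩
      exact (P0 q).not_dvd_index (hqd.trans (Subgroup.index_dvd_of_le hle))
    · have hle : closure (X : Set G) ≤ K.subgroupOf G := by
        rw [closure_le]
        intro z hz
        have hz' : z ∈ X.toList := Finset.mem_toList.2 hz
        obtain ⟨i, hi, rfl⟩ := List.getElem_of_mem hz'
        rw [Finset.length_toList] at hi
        change _ ∈ K.subgroupOf G
        rw [Subgroup.mem_subgroupOf]
        refine (le_sup_right : closure (Set.range f') ≤ K) (subset_closure ⟨⟨i, by omega⟩, ?_⟩)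
        change ((X.toList.getD i 1 : G) : Γ) = _
        rw [List.getD_eq_getElem]
      exact hXs q hq (by omega) (hqd.trans (Subgroup.index_dvd_of_le hle))
  have hfin : ∀ p : I, Finite {H : Subgroup Γ // IsPGroup p H} := fun p => inferInstance
  refine (Nat.card_le_card_of_surjective Φ hΦ).trans ?_
  rw [Nat.card_prod, Nat.card_pi, Nat.card_fun]
  apply le_of_eq
  congr 1
  · exact Finset.prod_coe_sort I (fun p => Nat.card {H : Subgroup Γ // IsPGroup p H})
  · simp

theorem pyb_count_nat (n D T p : ℕ) (hD : 0 < D) (hn : n ≤ D ^ 2) (hp : p.Prime) (hp7 : 7 ≤ p)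
    (hT : T = 2 * p) (hTD : T ≤ D) (hpn : 2 * n ≤ p * (p - 1)) :
    Nat.card (Subgroup (Equiv.Perm (Fin n))) ≤
      (∏ q ∈ (Finset.range (D + 1)).filter Nat.Prime,
        (n.factorial * ((n.factorial.factorization q + 1) * (2 ^ n.factorial.factorization q *
          q ^ (n.factorial.factorization q * n.factorial.factorization q / 4))))) *
        n.factorial ^ (pybR D T n) := by
  have hcardΓ : Nat.card (Equiv.Perm (Fin n)) = n.factorial := by
    rw [Nat.card_eq_fintype_card, Fintype.card_perm, Fintype.card_fin]
  have hgood : ∀ G : Subgroup (Equiv.Perm (Fin n)), PybGood D G (pybR D T n) := by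
    intro G
    refine pyb_main D T n hD (by omega) hn ?_ n le_rfl G (Fin n) ?_ (by simp)
    · intro Ω _ G' h1 h2 hMT
      subst hT
      exact pyb_halt D hp hp7 (by omega) (by omega) hMT
    · intro g q hq hDq hg
      by_contra hcon
      push Not at hcon
      have : g = 1 := by
        apply Subtype.ext
        ext x
        exact congrArg Fin.val (hcon x)
      rw [this, orderOf_one] at hg
      exact hq.one_lt.ne hg
  refine (pyb_subgroup_bound hgood).trans ?_
  rw [hcardΓ]
  apply Nat.mul_le_mul_right
  apply Finset.prod_le_prod'
  intro q hq
  rw [Finset.mem_filter] at hq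
  have := pyb_pcount_total (Γ := Equiv.Perm (Fin n)) hq.2 rfl
  rwa [hcardΓ] at this

end

theorem pyb_log_le (t : ℝ) (ht : 0 ≤ t) : Real.log (1 + t ^ 2) ≤ t := by
  rw [Real.log_le_iff_le_exp (by positivity)]
  have h := Real.sum_le_exp_of_nonneg ht 4
  simp [Finset.sum_range_succ, Nat.factorial] at h
  nlinarith [mul_nonneg ht (sq_nonneg (t - 3 / 2)), sq_nonneg t]

theorem pyb_tail (D : ℕ) (hD : 5 ≤ D) :
    ∑ q ∈ Finset.Icc 6 D, Real.log q / ((q : ℝ) - 1) ^ 2 ≤ 1 - 2 / √((D : ℝ) - 1) := by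
  induction D, hD using Nat.le_induction with
  | base =>
    have : √((5 : ℕ) - 1 : ℝ) = 2 := by
      rw [show ((5 : ℕ) - 1 : ℝ) = 2 ^ 2 by norm_num]
      exact Real.sqrt_sq (by norm_num)
    rw [this]; simp
  | succ D hD ih =>
    rw [Finset.sum_Icc_succ_top (by omega)]
    have hD' : (5 : ℝ) ≤ D := by exact_mod_cast hD
    set u := √((D : ℝ) - 1) with hu
    set v := √(D : ℝ) with hv
    have hu2 : u ^ 2 = D - 1 := Real.sq_sqrt (by linarith)
    have hv2 : v ^ 2 = D := Real.sq_sqrt (by linarith)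
    have hu0 : 0 < u := Real.sqrt_pos.2 (by linarith)
    have hv0 : 0 < v := Real.sqrt_pos.2 (by linarith)
    have huv : u ≤ v := Real.sqrt_le_sqrt (by linarith)
    push_cast
    rw [add_sub_cancel_right]
    have h1 : Real.log ((D : ℝ) + 1) ≤ v := by
      have := pyb_log_le v hv0.le
      rwa [hv2, add_comm] at this
    have h2 : Real.log ((D : ℝ) + 1) / (D : ℝ) ^ 2 ≤ 1 / v ^ 3 := by
      rw [← hv2, div_le_div_iff₀ (by positivity) (by positivity), hv2]
      calc Real.log ((D : ℝ) + 1) * v ^ 3 ≤ v * v ^ 3 := by gcongr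
        _ = 1 * (v ^ 2) ^ 2 := by ring
        _ = _ := by rw [hv2]
    have h3 : 1 / v ^ 3 ≤ 2 / u - 2 / v := by
      have h4 : 2 / u - 2 / v = 2 / (u * v * (u + v)) := by
        have h5 : v ^ 2 - u ^ 2 = 1 := by rw [hu2, hv2]; ring
        field_simp
        linear_combination h5
      rw [h4, div_le_div_iff₀ (by positivity) (by positivity)]
      calc 1 * (u * v * (u + v)) ≤ 1 * (v * v * (v + v)) := by gcongr
        _ = 2 * v ^ 3 := by ring
    linarith

theorem pyb_weights (D : ℕ) :
    ∑ q ∈ (Finset.range (D + 1)).filter Nat.Prime, Real.log q / ((q : ℝ) - 1) ^ 2 ≤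
      2 / 3 * Real.log 24 := by
  have hsub : (Finset.range (D + 1)).filter Nat.Prime ⊆ ({2, 3, 5} : Finset ℕ) ∪
      Finset.Icc 6 (D + 5) := by
    intro q hq
    simp only [Finset.mem_filter, Finset.mem_range] at hq
    simp only [Finset.mem_union, Finset.mem_insert, Finset.mem_singleton, Finset.mem_Icc]
    by_contra hcon
    have : q < 6 := by omega
    interval_cases q <;> revert hq <;> norm_num <;> omega
  have hnn : ∀ q : ℕ, 0 ≤ Real.log q / ((q : ℝ) - 1) ^ 2 := by
    intro q
    exact div_nonneg (Real.log_natCast_nonneg q) (sq_nonneg _)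
  have h1 := Finset.sum_le_sum_of_subset_of_nonneg hsub (fun q _ _ => hnn q)
  rw [Finset.sum_union (by
    rw [Finset.disjoint_left]
    intro q hq
    simp only [Finset.mem_insert, Finset.mem_singleton] at hq
    simp only [Finset.mem_Icc]
    omega)] at h1
  have h2 := pyb_tail (D + 5) (by omega)
  have h3 : 0 ≤ 2 / √(((D + 5 : ℕ) : ℝ) - 1) := by positivity
  have h4 : ∑ q ∈ ({2, 3, 5} : Finset ℕ), Real.log q / ((q : ℝ) - 1) ^ 2 =
      Real.log 2 + Real.log 3 / 4 + Real.log 5 / 16 := by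
    norm_num
    ring
  have e24 : Real.log 24 = 3 * Real.log 2 + Real.log 3 := by
    rw [show (24 : ℝ) = 2 ^ 3 * 3 by norm_num, Real.log_mul (by norm_num) (by norm_num), Real.log_pow]
    norm_num
  have e3 : 19 * Real.log 2 ≤ 12 * Real.log 3 := by
    have : Real.log (2 ^ 19) ≤ Real.log (3 ^ 12) := Real.log_le_log (by norm_num) (by norm_num)
    rw [Real.log_pow, Real.log_pow] at this
    exact_mod_cast this
  have e5 : 3 * Real.log 5 ≤ 7 * Real.log 2 := by
    have : Real.log (5 ^ 3) ≤ Real.log (2 ^ 7) := Real.log_le_log (by norm_num) (by norm_num)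
    rw [Real.log_pow, Real.log_pow] at this
    exact_mod_cast this
  have e2 := Real.log_two_gt_d9
  rw [h4] at h1
  rw [e24]
  linarith

theorem pyb_term (n q : ℕ) (hq : q.Prime) (hn : 1 ≤ Real.log n) :
    Real.log ((n.factorial * ((n.factorial.factorization q + 1) *
      (2 ^ n.factorial.factorization q *
          q ^ (n.factorial.factorization q * n.factorial.factorization q / 4))) : ℕ) : ℝ) ≤
      3 * n * Real.log n + (n : ℝ) ^ 2 / 4 * (Real.log q / ((q : ℝ) - 1) ^ 2) := by
  set a := n.factorial.factorization q with ha
  have : Fact q.Prime := ⟨hq⟩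
  have han : (q - 1) * a ≤ n := by
    rw [ha, Nat.factorization_def _ hq, sub_one_mul_padicValNat_factorial]
    omega
  have hq2 := hq.two_le
  have han1 : a ≤ n := le_trans (Nat.le_mul_of_pos_left a (by omega)) han
  have hq0 : (0 : ℝ) < q := by exact_mod_cast hq.pos
  have hq1 : (0 : ℝ) < (q : ℝ) - 1 := by
    have : (2 : ℝ) ≤ q := by exact_mod_cast hq2
    linarith
  have hlq : 0 ≤ Real.log q := Real.log_natCast_nonneg q
  push_cast
  rw [Real.log_mul (by positivity) (by positivity), Real.log_mul (by positivity) (by positivity),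
    Real.log_mul (by positivity) (by positivity), Real.log_pow, Real.log_pow]
  have h1 : Real.log n.factorial ≤ n * Real.log n := by
    rw [← Real.log_pow]
    apply Real.log_le_log (by positivity)
    exact_mod_cast Nat.factorial_le_pow n
  have hl2 : Real.log 2 ≤ 1 := by
    have := Real.log_two_lt_d9
    linarith
  have h2 : Real.log ((a : ℝ) + 1) ≤ n := by
    have := Real.log_le_sub_one_of_pos (show (0 : ℝ) < (a : ℝ) + 1 by positivity)
    have : (a : ℝ) ≤ n := by exact_mod_cast han1
    linarith
  have h3 : (a : ℝ) * Real.log 2 ≤ n := by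
    have h5 : (a : ℝ) ≤ n := by exact_mod_cast han1
    have h6 : (0 : ℝ) ≤ a := by positivity
    have : (0 : ℝ) ≤ Real.log 2 := by positivity
    nlinarith
  have h4 : ((a * a / 4 : ℕ) : ℝ) * Real.log q ≤
      (n : ℝ) ^ 2 / 4 * (Real.log q / ((q : ℝ) - 1) ^ 2) := by
    have h5 : ((a * a / 4 : ℕ) : ℝ) ≤ (a : ℝ) * a / 4 := by
      have := Nat.cast_div_le (α := ℝ) (m := a * a) (n := 4)
      push_cast at this
      exact this
    have h6 : ((q : ℝ) - 1) * a ≤ n := by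
      have : (((q - 1) * a : ℕ) : ℝ) ≤ n := by exact_mod_cast han
      rw [Nat.cast_mul, Nat.cast_sub hq.one_le] at this
      simpa using this
    have h7 : (a : ℝ) * a ≤ (n : ℝ) ^ 2 / ((q : ℝ) - 1) ^ 2 := by
      rw [le_div_iff₀ (by positivity)]
      have h8 : 0 ≤ ((q : ℝ) - 1) * a := by positivity
      calc (a : ℝ) * a * ((q : ℝ) - 1) ^ 2 = (((q : ℝ) - 1) * a) ^ 2 := by ring
        _ ≤ _ := by gcongr
    calc ((a * a / 4 : ℕ) : ℝ) * Real.log q ≤ (n : ℝ) ^ 2 / ((q : ℝ) - 1) ^ 2 / 4 * Real.log q := by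
          apply mul_le_mul_of_nonneg_right _ hlq
          linarith
      _ = _ := by ring
  have hnn : (0 : ℝ) ≤ n := by positivity
  nlinarith

theorem pyb_log_bound (n D T p : ℕ) (hD : 0 < D) (hn : n ≤ D ^ 2) (hp : p.Prime) (hp7 : 7 ≤ p)
    (hT : T = 2 * p) (hTD : T ≤ D) (hpn : 2 * n ≤ p * (p - 1)) (hln : 1 ≤ Real.log n) :
    Real.log (Nat.card (Subgroup (Equiv.Perm (Fin n)))) ≤
      (3 * (D + 1) + pybR D T n) * (n * Real.log n) + (n : ℝ) ^ 2 / 6 * Real.log 24 := by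
  have h := pyb_count_nat n D T p hD hn hp hp7 hT hTD hpn
  have hpos : 0 < Nat.card (Subgroup (Equiv.Perm (Fin n))) := Nat.card_pos
  have h1 := Real.log_le_log (by exact_mod_cast hpos) (Nat.cast_le (α := ℝ).2 h)
  refine h1.trans ?_
  have hfac : (n.factorial : ℝ) ≠ 0 := by positivity
  rw [Nat.cast_mul, Nat.cast_prod, Nat.cast_pow, Real.log_mul, Real.log_prod, Real.log_pow]
  · have h2 : Real.log n.factorial ≤ n * Real.log n := by
      rw [← Real.log_pow]
      apply Real.log_le_log (by positivity)
      exact_mod_cast Nat.factorial_le_pow n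
    have h3 : (pybR D T n : ℝ) * Real.log n.factorial ≤ pybR D T n * (n * Real.log n) := by
      gcongr
    have h4 := Finset.sum_le_sum (fun q (hq : q ∈ (Finset.range (D + 1)).filter Nat.Prime) =>
      pyb_term n q (Finset.mem_filter.1 hq).2 hln)
    rw [Finset.sum_add_distrib, Finset.sum_const, nsmul_eq_mul, ← Finset.mul_sum] at h4
    have h5 : (((Finset.range (D + 1)).filter Nat.Prime).card : ℝ) ≤ D + 1 := by
      have := Finset.card_filter_le (Finset.range (D + 1)) Nat.Prime
      rw [Finset.card_range] at this
      exact_mod_cast this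
    have h6 := mul_le_mul_of_nonneg_left (pyb_weights D) (show 0 ≤ (n : ℝ) ^ 2 / 4 by positivity)
    have h7 : (((Finset.range (D + 1)).filter Nat.Prime).card : ℝ) * (3 * n * Real.log n) ≤
        (D + 1) * (3 * n * Real.log n) := by
      gcongr
    refine (add_le_add h4 h3).trans ?_
    linarith
  · intro q hq
    have := (Finset.mem_filter.1 hq).2.pos
    positivity
  · rw [Finset.prod_ne_zero_iff]
    intro q hq
    have := (Finset.mem_filter.1 hq).2.pos
    positivity
  · positivity

theorem pyb_numeric (n : ℕ) (x δ : ℝ) (hx : 16 ≤ x) (hxn : x ^ 4 = n)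
    (hlog : 292 * Real.log x ≤ δ * x) :
    Real.log (Nat.card (Subgroup (Equiv.Perm (Fin n)))) ≤
      (1 / 6 + δ) * (n : ℝ) ^ 2 * Real.log 24 := by
  have hx0 : 0 < x := by linarith
  have hx2 : 16 * x ≤ x ^ 2 := by nlinarith
  have hx3 : 16 * x ^ 2 ≤ x ^ 3 := by nlinarith [sq_nonneg x]
  set D := ⌈x ^ 3⌉₊ with hDdef
  set c := ⌈x ^ 2⌉₊ with hcdef
  have hD1 : x ^ 3 ≤ D := Nat.le_ceil _
  have hD2 : (D : ℝ) < x ^ 3 + 1 := Nat.ceil_lt_add_one (by positivity)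
  have hc1 : x ^ 2 ≤ c := Nat.le_ceil _
  have hc2 : (c : ℝ) < x ^ 2 + 1 := Nat.ceil_lt_add_one (by positivity)
  obtain ⟨p, hp, hp1, hp2⟩ := Nat.exists_prime_lt_and_le_two_mul (2 * (c + 1)) (by omega)
  have hc3 : 16 ≤ c := by
    have : (16 : ℝ) ≤ c := by nlinarith
    exact_mod_cast this
  have hp2' : (p : ℝ) ≤ 2 * (2 * (c + 1)) := by exact_mod_cast hp2
  have hTx : ((2 * p : ℕ) : ℝ) ≤ 16 * x ^ 2 := by
    push_cast
    nlinarith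
  have hDpos : 0 < D := by
    have : (0 : ℝ) < D := lt_of_lt_of_le (by positivity) hD1
    exact_mod_cast this
  have hlx : 1 ≤ Real.log x := by
    rw [Real.le_log_iff_exp_le hx0]
    have := Real.exp_one_lt_d9
    linarith
  have hln : Real.log n = 4 * Real.log x := by
    rw [← hxn, Real.log_pow]; norm_num
  have hn : n ≤ D ^ 2 := by
    have : (n : ℝ) ≤ (D : ℝ) ^ 2 := by
      calc (n : ℝ) = x ^ 4 := hxn.symm
        _ ≤ x ^ 6 := pow_le_pow_right₀ (by linarith) (by norm_num)
        _ = (x ^ 3) ^ 2 := by ring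
        _ ≤ _ := by gcongr
    exact_mod_cast this
  have hTD : 2 * p ≤ D := by
    have : ((2 * p : ℕ) : ℝ) ≤ D := by linarith
    exact_mod_cast this
  have hnc : n ≤ c ^ 2 := by
    have : (n : ℝ) ≤ (c : ℝ) ^ 2 := by
      calc (n : ℝ) = (x ^ 2) ^ 2 := by rw [← hxn]; ring
        _ ≤ _ := by gcongr
    exact_mod_cast this
  have hpn : 2 * n ≤ p * (p - 1) := by
    have h1 : 2 * c ≤ p := by omega
    have h2 : 2 * c ≤ p - 1 := by omega
    have := Nat.mul_le_mul h1 h2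
    nlinarith
  have h := pyb_log_bound n D (2 * p) p hDpos hn hp (by omega) rfl hTD hpn (by rw [hln]; linarith)
  have hR : (pybR D (2 * p) n : ℝ) ≤ 64 * x ^ 3 := by
    have h1 : pybR D (2 * p) n * D ≤ (2 * n) * (2 * (2 * p)) :=
      pybR_le.trans (Nat.mul_le_mul_right _ (Nat.sub_le _ _))
    have h2 : (pybR D (2 * p) n : ℝ) * D ≤ (2 * n) * (2 * ((2 * p : ℕ) : ℝ)) := by
      exact_mod_cast h1
    have h3 : (pybR D (2 * p) n : ℝ) * x ^ 3 ≤ 64 * x ^ 3 * x ^ 3 := by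
      calc (pybR D (2 * p) n : ℝ) * x ^ 3 ≤ (pybR D (2 * p) n : ℝ) * D := by gcongr
        _ ≤ _ := h2
        _ ≤ (2 * x ^ 4) * (2 * (16 * x ^ 2)) := by rw [hxn]; gcongr
        _ = 64 * x ^ 3 * x ^ 3 := by ring
    exact le_of_mul_le_mul_right h3 (by positivity)
  have h24 : 1 ≤ Real.log 24 := by
    rw [Real.le_log_iff_exp_le (by norm_num)]
    have := Real.exp_one_lt_d9
    linarith
  have hx3' : 256 * x ≤ x ^ 3 := by nlinarith
  have hS : 3 * ((D : ℝ) + 1) + pybR D (2 * p) n ≤ 73 * x ^ 3 := by nlinarith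
  have hδ : 0 ≤ δ * x := by linarith
  have hfin : (3 * ((D : ℝ) + 1) + pybR D (2 * p) n) * (n * Real.log n) ≤
      δ * (n : ℝ) ^ 2 * Real.log 24 := by
    calc (3 * ((D : ℝ) + 1) + pybR D (2 * p) n) * (n * Real.log n)
        ≤ (73 * x ^ 3) * (x ^ 4 * (4 * Real.log x)) := by
          rw [hln, hxn]
          gcongr
      _ = x ^ 7 * (292 * Real.log x) := by ring
      _ ≤ x ^ 7 * (δ * x) := by gcongr
      _ ≤ x ^ 7 * (δ * x) * Real.log 24 := le_mul_of_one_le_right (by positivity) h24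
      _ = δ * (x ^ 4) ^ 2 * Real.log 24 := by ring
      _ = _ := by rw [hxn]
  linarith

/-- (Pyber) The number of subgroups of the symmetric group on `n` points is at most
`24 ^ ((1/6 + ε) n²)` for all sufficiently large `n`. -/
theorem pyber_subgroup_count (ε : ℝ) (hε : 0 < ε) :
    ∃ N : ℕ, ∀ n : ℕ, N ≤ n →
      (Nat.card (Subgroup (Equiv.Perm (Fin n))) : ℝ) ≤
        (24 : ℝ) ^ ((1 / 6 + ε) * (n : ℝ) ^ 2) := by
  have h1 : ∀ᶠ x : ℝ in Filter.atTop, 292 * Real.log x ≤ ε * x ∧ 16 ≤ x := by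
    have h2 := Real.isLittleO_log_id_atTop.def (show 0 < ε / 292 by positivity)
    filter_upwards [h2, Filter.eventually_ge_atTop 16] with x hx hx16
    refine ⟨?_, hx16⟩
    have h3 := (le_abs_self _).trans hx
    simp only [id, Real.norm_eq_abs, abs_of_nonneg (show 0 ≤ x by linarith)] at h3
    linarith
  have h2 : Filter.Tendsto (fun n : ℕ => (n : ℝ) ^ (1 / 4 : ℝ)) Filter.atTop Filter.atTop :=
    (tendsto_rpow_atTop (by norm_num)).comp tendsto_natCast_atTop_atTop
  obtain ⟨N, hN⟩ := Filter.eventually_atTop.1 (h2.eventually h1)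
  refine ⟨N, fun n hn => ?_⟩
  obtain ⟨h3, h4⟩ := hN n hn
  have h5 := pyb_numeric n ((n : ℝ) ^ (1 / 4 : ℝ)) ε h4 (by
    rw [← Real.rpow_natCast, ← Real.rpow_mul (by positivity)]; norm_num) h3
  have hpos : 0 < Nat.card (Subgroup (Equiv.Perm (Fin n))) := Nat.card_pos
  rw [← Real.log_le_log_iff (by exact_mod_cast hpos) (by positivity),
    Real.log_rpow (by norm_num)]
  exact h5
end
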